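/- arXiv:1207.1481 — 3 statements merged into one kernel-verified Lean document; each statement's English description precedes it below -/
import Mathlib

section
/- Let f be an orientation-preserving C^2 circle diffeomorphism of irrational rotation number ρ, and let (p_k/q_k) be the sequence of convergents of ρ. Then the sequence of iterates f^{q_k} converges to the identity in the C^1 topology, i.e., f^{q_k} → id uniformly and D(f^{q_k}) → 1 uniformly. -/
/-!
Let `ρ` be the rotation number and let `H` be the Poincaré semiconjugacy, `H ∘ F = H + ρ`. It is
continuous, its range being dense (`exists_semiLin`). Everything rests on one combinatorial fact
about a reduced fraction `p / q` with `|ρ - p / q| ≤ 1 / q ^ 2`: for `i < q` the point `i ρ` is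
within `1 / q` of `i p / q`, and the residues of `i p` modulo `q` are all distinct. Hence the first
`q` images of an arc of `H`-length at most `K / q` overlap at most `K + 2` times
(`SemiLin.sum_integral_le`), and those of an arc of `H`-length at least `3 / q` cover the circle
(`SemiLin.le_sum_integral`).

The first half gives Denjoy's inequality for Birkhoff sums (`SemiLin.abs_birkhoffSum_sub_le`), hence
bounded distortion and the absence of wandering arcs. So `H` is a homeomorphism
(`SemiLin.strictMono_H`), and `f ^ q` tends to the identity because it moves points by an
`H`-distance at most `1 / q`.

For the derivatives one has to show that the Birkhoff sums `S_q (log Df)` tend to `0` uniformly.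
Denjoy's inequality only bounds them by a multiple of `Var (log Df)`. The variation can however be
made small by passing to a cohomologous function. The orbit average of a `C¹` function `w`
differs from `w` by a continuous coboundary, and for suitable `q` it has variation at most
`c Var w` with a fixed `c < 1` (`SemiLin.exists_avg_contract`): on each arc of `H`-length comparable
to `1 / q`, bounded distortion and covering bound from below both the averaged density of the
positive part of `w'` and that of the negative part, so that a definite proportion cancels. This is
a quantitative form of the ergodicity of `f` with respect to Lebesgue measure. Iterating,
`log Df = w + v - v ∘ f` with `v` continuous and `Var w` as small as desired
(`SemiLin.exists_cohomologous`). Since `S_q (log Df)` vanishes somewhere by the mean value theorem,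
and every point is reached, up to an `H`-distance `2 / q`, from that zero by fewer than `q`
iterations, it follows that `S_q (log Df)` is uniformly small (`SemiLin.birkhoffSum_le`).
-/

open MeasureTheory Function Filter Set
open scoped Topology

noncomputable section

/-- The circle `ℝ/ℤ`. -/
abbrev 𝕊 : Type := UnitAddCircle

/-- An orientation-preserving `C¹` diffeomorphism of the circle `ℝ/ℤ`, described by a lift
`F : ℝ → ℝ` (a `C¹` map commuting with the unit translation, with everywhere positive
derivative, admitting a `C¹` inverse). -/
structure C1Diffeo : Type where
  F : ℝ → ℝ
  Finv : ℝ → ℝ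
  contDiff : ContDiff ℝ 1 F
  contDiff_inv : ContDiff ℝ 1 Finv
  deriv_pos : ∀ x, 0 < deriv F x
  map_add_one : ∀ x, F (x + 1) = F x + 1
  left_inv : Function.LeftInverse Finv F
  right_inv : Function.RightInverse Finv F

/-- If a map `ℝ → ℝ` commutes with the unit translation, so do its iterates. -/
lemma iterate_map_add_one {G : ℝ → ℝ} (h : ∀ x, G (x + 1) = G x + 1) (n : ℕ) (x : ℝ) :
    G^[n] (x + 1) = G^[n] x + 1 := by
  induction n with
  | zero => simp
  | succ n ih => rw [Function.iterate_succ_apply', Function.iterate_succ_apply', ih, h]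

/-- The derivative of a periodic function is periodic. -/
lemma Function.Periodic.deriv' {G : ℝ → ℝ} (h : Function.Periodic G 1) :
    Function.Periodic (deriv G) 1 := by
  intro x
  have h2 : (fun y => G (y + 1)) = G := funext h
  have h3 := congrArg (fun k : ℝ → ℝ => deriv k x) h2
  simpa [deriv_comp_add_const] using h3

/-- The derivative of a map commuting with the unit translation is periodic. -/
lemma periodic_deriv_of_shift {G : ℝ → ℝ} (h : ∀ x, G (x + 1) = G x + 1) :
    Function.Periodic (deriv G) 1 := by
  intro x
  have h2 : (fun y => G (y + 1)) = fun y => G y + 1 := funext h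
  have h3 := congrArg (fun k : ℝ → ℝ => deriv k x) h2
  simpa [deriv_comp_add_const, deriv_add_const] using h3

namespace C1Diffeo

variable (f : C1Diffeo)

lemma inv_map_add_one : ∀ x, f.Finv (x + 1) = f.Finv x + 1 := fun x => by
  conv_lhs => rw [← f.right_inv x]
  rw [← f.map_add_one, f.left_inv]

/-- Lift of the `n`-th iterate of `f`, `n : ℤ`. -/
def iterZ : ℤ → ℝ → ℝ
  | Int.ofNat n => f.F^[n]
  | Int.negSucc n => f.Finv^[n + 1]

lemma iterZ_map_add_one (n : ℤ) (x : ℝ) : f.iterZ n (x + 1) = f.iterZ n x + 1 := by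
  cases n with
  | ofNat n => exact iterate_map_add_one f.map_add_one n x
  | negSucc n => exact iterate_map_add_one f.inv_map_add_one (n + 1) x

/-- The induced self-map of the circle. -/
def toCircle : 𝕊 → 𝕊 :=
  Function.Periodic.lift (f := fun x : ℝ => ((f.F x : ℝ) : 𝕊)) (fun x => by
    show ((f.F (x + 1) : ℝ) : 𝕊) = ((f.F x : ℝ) : 𝕊)
    rw [f.map_add_one]
    exact AddCircle.coe_add_period 1 (f.F x))

/-- The `n`-th iterate (`n : ℤ`) of the induced self-map of the circle. -/
def mapZ (n : ℤ) : 𝕊 → 𝕊 :=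
  Function.Periodic.lift (f := fun x : ℝ => ((f.iterZ n x : ℝ) : 𝕊)) (fun x => by
    show ((f.iterZ n (x + 1) : ℝ) : 𝕊) = ((f.iterZ n x : ℝ) : 𝕊)
    rw [f.iterZ_map_add_one]
    exact AddCircle.coe_add_period 1 (f.iterZ n x))

/-- The derivative `Df`, as a function on the circle. -/
def Df : 𝕊 → ℝ := (periodic_deriv_of_shift f.map_add_one).lift

/-- The derivative `D(fⁿ)` of the `n`-th iterate (`n : ℕ`), as a function on the circle. -/
def DfIter (n : ℕ) : 𝕊 → ℝ :=
  (periodic_deriv_of_shift (iterate_map_add_one f.map_add_one n)).lift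

/-- The derivative `D(fⁿ)` of the `n`-th iterate (`n : ℤ`), as a function on the circle. -/
def DfZ (n : ℤ) : 𝕊 → ℝ := (periodic_deriv_of_shift (f.iterZ_map_add_one n)).lift

/-- The lift, as a degree one monotone map of the real line. -/
def deg1 : CircleDeg1Lift :=
  ⟨⟨f.F, (strictMono_of_deriv_pos f.deriv_pos).monotone⟩, f.map_add_one⟩

/-- The rotation number of `f` (the translation number of the given lift). -/
def rot : ℝ := f.deg1.translationNumber

end C1Diffeo

/-- The lift to `ℝ` of a function on the circle. -/
def lft (u : 𝕊 → ℝ) : ℝ → ℝ := fun x => u ↑x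

lemma lft_periodic (u : 𝕊 → ℝ) : Function.Periodic (lft u) 1 := fun x => by
  simp only [lft]
  rw [AddCircle.coe_add_period]

/-- A function on the circle is `C¹` if its lift to `ℝ` is `C¹`. -/
def IsC1 (u : 𝕊 → ℝ) : Prop := ContDiff ℝ 1 (lft u)

/-- The derivative of a function on the circle (the descent of the derivative
of its lift). -/
def derivS (u : 𝕊 → ℝ) : 𝕊 → ℝ := ((lft_periodic u).deriv').lift

/-- The `C¹` norm of a function on the circle. -/
def c1Norm (u : 𝕊 → ℝ) : ℝ := (⨆ x : 𝕊, |u x|) + ⨆ x : 𝕊, |derivS u x|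

/-- The space of `C¹` real functions on the circle, as a subspace of all functions. -/
def C1Sub : Submodule ℝ (𝕊 → ℝ) where
  carrier := {u | IsC1 u}
  add_mem' := fun hu hv => by
    simp only [Set.mem_setOf_eq, IsC1] at *
    exact hu.add hv
  zero_mem' := by
    simp only [Set.mem_setOf_eq, IsC1]
    exact contDiff_const
  smul_mem' := fun c u hu => by
    simp only [Set.mem_setOf_eq, IsC1] at *
    exact hu.const_smul c

/-- A (continuous) `1`-distribution on the circle: a linear functional on the space of `C¹`
functions which is bounded with respect to the `C¹` norm. -/
def IsDistribution (L : C1Sub →ₗ[ℝ] ℝ) : Prop :=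
  ∃ C : ℝ, ∀ u : C1Sub, |L u| ≤ C * c1Norm (u : 𝕊 → ℝ)

/-- Invariance of a `1`-distribution under a circle diffeomorphism: `L (u ∘ f) = L u`. -/
def InvariantUnder (f : C1Diffeo) (L : C1Sub →ₗ[ℝ] ℝ) : Prop :=
  ∀ u v : C1Sub, (∀ x, (v : 𝕊 → ℝ) x = (u : 𝕊 → ℝ) (f.toCircle x)) → L v = L u

/-- `K` is a minimal invariant Cantor set for the circle diffeomorphism `f`: a nonempty
perfect totally disconnected invariant set in which every (full) orbit is dense. -/
def IsMinimalInvariantCantor (f : C1Diffeo) (K : Set 𝕊) : Prop :=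
  K.Nonempty ∧ Perfect K ∧ IsTotallyDisconnected K ∧
    f.toCircle '' K = K ∧
    ∀ x ∈ K, closure (Set.range fun n : ℤ => f.mapZ n x) = K

/-- The total mass `S = Σ_{n ∈ ℤ} D(fⁿ)(x₀)` of the derivatives along the orbit of `x₀`. -/
def orbitSum (f : C1Diffeo) (x₀ : 𝕊) : ℝ := ∑' n : ℤ, f.DfZ n x₀

/-- The atomic measure `ν = S⁻¹ Σ_{n ∈ ℤ} D(fⁿ)(x₀) · δ_{fⁿ(x₀)}` on the circle. -/
def orbitMeasure (f : C1Diffeo) (x₀ : 𝕊) : Measure 𝕊 :=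
  (ENNReal.ofReal (orbitSum f x₀))⁻¹ •
    Measure.sum fun n : ℤ => ENNReal.ofReal (f.DfZ n x₀) • Measure.dirac (f.mapZ n x₀)

/-! ### Rational approximations -/

/-- A reduced fraction `p / q` approximating `ρ` to within `1 / q ^ 2`. -/
structure GoodApprox (ρ : ℝ) (p : ℤ) (q : ℕ) : Prop where
  pos : 0 < q
  coprime : IsCoprime p (q : ℤ)
  approx : |(q : ℝ) * ρ - p| * q ≤ 1

/-- The continuants of `ρ` are integers. -/
lemma contsAux_int (ρ : ℝ) (n : ℕ) :
    ∃ a b : ℤ, (GenContFract.of ρ).contsAux n = ⟨(a : ℝ), (b : ℝ)⟩ := by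
  suffices h : (∃ a b : ℤ, (GenContFract.of ρ).contsAux n = ⟨(a : ℝ), (b : ℝ)⟩) ∧
      ∃ a b : ℤ, (GenContFract.of ρ).contsAux (n + 1) = ⟨(a : ℝ), (b : ℝ)⟩ from h.1
  induction n with
  | zero =>
    refine ⟨⟨1, 0, by simp [GenContFract.contsAux]⟩, ⟨⌊ρ⌋, 1, ?_⟩⟩
    simp [GenContFract.contsAux, GenContFract.of_h_eq_floor]
  | succ n ih =>
    refine ⟨ih.2, ?_⟩
    obtain ⟨⟨a, b, h0⟩, ⟨c, d, h1⟩⟩ := ih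
    rcases hs : (GenContFract.of ρ).s.get? n with _ | gp
    · refine ⟨c, d, ?_⟩
      rw [← h1]
      exact GenContFract.contsAux_stable_step_of_terminated hs
    · obtain ⟨ha, z, hz⟩ := GenContFract.of_partNum_eq_one_and_exists_int_partDen_eq hs
      refine ⟨z * c + a, z * d + b, ?_⟩
      rw [GenContFract.contsAux_recurrence hs h0 h1, ha, hz]
      push_cast
      simp

lemma not_terminatedAt_of_irrational {ρ : ℝ} (hρ : Irrational ρ) (n : ℕ) :
    ¬ (GenContFract.of ρ).TerminatedAt n := fun h => by
  obtain ⟨r, hr⟩ := (GenContFract.terminates_iff_rat ρ).1 ⟨n, h⟩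
  exact hρ ⟨r, hr.symm⟩

lemma goodApprox_of_dens {ρ : ℝ} (hρ : Irrational ρ) (k n : ℕ)
    (hn : (n : ℝ) = (GenContFract.of ρ).dens k) : ∃ p : ℤ, GoodApprox ρ p n := by
  have hterm := not_terminatedAt_of_irrational hρ
  have hfib : ∀ m, (1 : ℝ) ≤ (GenContFract.of ρ).dens m := fun m => by
    refine le_trans ?_ (GenContFract.succ_nth_fib_le_of_nth_den (Or.inr (hterm _)))
    exact_mod_cast Nat.fib_pos.2 (Nat.succ_pos m)
  obtain ⟨a, b, h0⟩ := contsAux_int ρ (k + 1)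
  obtain ⟨c, d, h1⟩ := contsAux_int ρ (k + 2)
  have hA : (GenContFract.of ρ).nums k = a := by
    rw [GenContFract.num_eq_conts_a, GenContFract.nth_cont_eq_succ_nth_contAux, h0]
  have hB : (GenContFract.of ρ).dens k = b := by
    rw [GenContFract.den_eq_conts_b, GenContFract.nth_cont_eq_succ_nth_contAux, h0]
  have hC : (GenContFract.of ρ).nums (k + 1) = c := by
    rw [GenContFract.num_eq_conts_a, GenContFract.nth_cont_eq_succ_nth_contAux, h1]
  have hD : (GenContFract.of ρ).dens (k + 1) = d := by
    rw [GenContFract.den_eq_conts_b, GenContFract.nth_cont_eq_succ_nth_contAux, h1]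
  have hdet := SimpContFract.determinant (s := SimpContFract.of ρ) (n := k) (hterm k)
  change (GenContFract.of ρ).nums k * (GenContFract.of ρ).dens (k + 1) -
      (GenContFract.of ρ).dens k * (GenContFract.of ρ).nums (k + 1) = _ at hdet
  rw [hA, hB, hC, hD] at hdet
  have hdet' : a * d - b * c = (-1) ^ (k + 1) := by exact_mod_cast hdet
  have hnb : (n : ℤ) = b := by
    have : (n : ℝ) = b := hn.trans hB
    exact_mod_cast this
  have hn1 : (1 : ℝ) ≤ n := hn ▸ hfib k
  refine ⟨a, by exact_mod_cast hn1, ?_, ?_⟩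
  · refine ⟨(-1) ^ (k + 1) * d, -((-1) ^ (k + 1) * c), ?_⟩
    have : ((-1 : ℤ) ^ (k + 1)) * (-1) ^ (k + 1) = 1 := by
      rw [← mul_pow]; simp
    rw [hnb]
    linear_combination ((-1 : ℤ) ^ (k + 1)) * hdet' + this
  · have h := GenContFract.abs_sub_convs_le (v := ρ) (hterm k)
    have hmono : (GenContFract.of ρ).dens k ≤ (GenContFract.of ρ).dens (k + 1) :=
      GenContFract.of_den_mono
    rw [GenContFract.conv_eq_num_div_den, hA] at h
    rw [← hn] at h hmono
    have hpos : (0 : ℝ) < n := by linarith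
    have e : (n : ℝ) * ρ - a = n * (ρ - a / n) := by field_simp
    have h2 : |ρ - a / n| ≤ 1 / (n * n : ℝ) := h.trans (by gcongr)
    rw [e, abs_mul, abs_of_pos hpos]
    calc (n : ℝ) * |ρ - a / n| * n ≤ n * (1 / (n * n : ℝ)) * n := by gcongr
      _ = 1 := by field_simp

lemma tendsto_dens {ρ : ℝ} (hρ : Irrational ρ) (q : ℕ → ℕ)
    (hq : ∀ k, (q k : ℝ) = (GenContFract.of ρ).dens k) : Tendsto q atTop atTop := by
  have h : ∀ k, Nat.fib (k + 1) ≤ q k := fun k => by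
    have := GenContFract.succ_nth_fib_le_of_nth_den (v := ρ) (n := k)
      (Or.inr (not_terminatedAt_of_irrational hρ _))
    rw [← hq] at this
    exact_mod_cast this
  refine tendsto_atTop_mono' _ (f₁ := fun k => k) ?_ tendsto_id
  filter_upwards [eventually_ge_atTop 5] with k hk
  exact (Nat.le_fib_self hk).trans ((Nat.fib_mono k.le_succ).trans (h k))

/-- As `p` is invertible modulo `q`, the numbers `i * p + l` with `0 ≤ i < q` form a complete
residue system. -/
lemma sum_residues {p : ℤ} {q : ℕ} (hq : 0 < q) (hpq : IsCoprime p (q : ℤ)) (m : ℤ → ℝ)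
    (hm : Function.Periodic m (q : ℤ)) (l : ℤ) :
    ∑ i ∈ Finset.range q, m (i * p + l) = ∑ i ∈ Finset.range q, m i := by
  have hq' : (q : ℤ) ≠ 0 := by exact_mod_cast hq.ne'
  have hmod : ∀ j : ℤ, m (j % q) = m j := fun j => by
    conv_rhs => rw [← Int.emod_add_mul_ediv j q, mul_comm]
    exact ((hm.int_mul (j / q)) (j % q)).symm
  have hinj : Set.InjOn (fun i : ℕ => ((i * p + l) % q).toNat) (Finset.range q : Set ℕ) := by
    intro i hi j hj hij
    simp only [Finset.coe_range, Set.mem_Iio] at hi hj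
    have h1 := Int.emod_nonneg (i * p + l) hq'
    have h2 := Int.emod_nonneg (j * p + l) hq'
    have h3 : (i * p + l) % q = (j * p + l) % q := by
      simp only at hij; omega
    have h4 : (q : ℤ) ∣ ((j : ℤ) - i) * p := by
      have := Int.ModEq.dvd (n := q) h3
      have e : ((j : ℤ) - i) * p = (j * p + l) - (i * p + l) := by ring
      rwa [e]
    have h5 : (q : ℤ) ∣ (j : ℤ) - i := hpq.symm.dvd_of_dvd_mul_right h4
    have h6 := Int.eq_zero_of_abs_lt_dvd h5 (by rw [abs_lt]; constructor <;> omega)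
    omega
  have himg : (Finset.range q).image (fun i : ℕ => ((i * p + l) % q).toNat) = Finset.range q := by
    refine Finset.eq_of_subset_of_card_le ?_ ?_
    · intro t ht
      obtain ⟨i, -, rfl⟩ := Finset.mem_image.1 ht
      have h1 := Int.emod_nonneg (i * p + l) hq'
      have h2 := Int.emod_lt_of_pos (i * p + l) (by exact_mod_cast hq : (0 : ℤ) < q)
      simp only [Finset.mem_range]; omega
    · rw [Finset.card_image_of_injOn hinj]
  conv_rhs => rw [← himg, Finset.sum_image hinj]
  refine Finset.sum_congr rfl fun i _ => ?_
  simp only [Int.toNat_of_nonneg (Int.emod_nonneg _ hq'), hmod]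

/-! ### Combinatorics of orbits -/

section Combinatorics

lemma C1Diffeo.iterate_add_int (f : C1Diffeo) (n : ℕ) (x : ℝ) (m : ℤ) :
    f.F^[n] (x + m) = f.F^[n] x + m := by
  have h : ∀ x, (f.deg1 ^ n) x = f.F^[n] x := fun x => by rw [CircleDeg1Lift.coe_pow]; rfl
  rw [← h, ← h, CircleDeg1Lift.map_add_int]

lemma C1Diffeo.strictMono_iterate (f : C1Diffeo) (n : ℕ) : StrictMono f.F^[n] :=
  (strictMono_of_deriv_pos f.deriv_pos).iterate n

lemma C1Diffeo.bijective (f : C1Diffeo) : Bijective f.F :=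
  ⟨f.left_inv.injective, f.right_inv.surjective⟩

/-- A continuous semiconjugacy `H` from the lift `f.F` to the translation by `ρ`, together with a
right inverse `G` of `H` that commutes with the unit translation. -/
structure SemiLin (f : C1Diffeo) (ρ : ℝ) where
  H : CircleDeg1Lift
  cont : Continuous H
  semi : ∀ x, H (f.F x) = H x + ρ
  G : ℝ → ℝ
  HG : ∀ t, H (G t) = t
  G_add_one : ∀ t, G (t + 1) = G t + 1

/-- The Poincaré semiconjugacy is continuous because its range contains a translate of the dense
group `ℤ + ρ ℤ`. -/
lemma exists_semiLin (f : C1Diffeo) {ρ : ℝ} (hρ : Irrational ρ) (hrot : f.rot = ρ) :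
    Nonempty (SemiLin f ρ) := by
  obtain ⟨H, hH⟩ := CircleDeg1Lift.semiconj_of_bijective_of_translationNumber_eq
    (f₁ := f.deg1) (f₂ := CircleDeg1Lift.translate (Multiplicative.ofAdd ρ)) f.bijective
    (CircleDeg1Lift.isUnit_iff_bijective.1 (Units.isUnit _))
    (by rw [CircleDeg1Lift.translationNumber_translate]; exact hrot)
  have semi : ∀ x, H (f.F x) = H x + ρ := fun x => by
    have := hH x
    rw [CircleDeg1Lift.translate_apply, add_comm] at this
    exact this
  have hsub : ∀ t ∈ AddSubgroup.closure ({ρ, 1} : Set ℝ),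
      ∀ s ∈ range H, s + t ∈ range H ∧ s - t ∈ range H := by
    intro t ht
    induction ht using AddSubgroup.closure_induction with
    | mem t ht =>
      rintro s ⟨x, rfl⟩
      rcases ht with rfl | rfl
      · refine ⟨⟨f.F x, semi x⟩, ⟨f.Finv x, ?_⟩⟩
        have := semi (f.Finv x)
        rw [f.right_inv x] at this
        linarith
      · refine ⟨⟨x + 1, H.map_add_one x⟩, ⟨x - 1, ?_⟩⟩
        have := H.map_add_one (x - 1)
        rw [sub_add_cancel] at this
        linarith
    | zero => intro s hs; simpa using hs
    | add a b _ _ iha ihb =>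
      intro s hs
      refine ⟨?_, ?_⟩
      · rw [← add_assoc]; exact (ihb _ (iha s hs).1).1
      · rw [← sub_sub]; exact (ihb _ (iha s hs).2).2
    | neg a _ iha =>
      intro s hs
      simpa [sub_eq_add_neg, and_comm] using iha s hs
  have hdense : DenseRange H := by
    have h1 : Dense (AddSubgroup.closure ({ρ, 1} : Set ℝ) : Set ℝ) :=
      dense_addSubgroupClosure_pair_iff.2 (by simpa using hρ)
    have h2 : DenseRange (fun t : ℝ => H 0 + t) := (Homeomorph.addLeft (H 0)).surjective.denseRange
    have h3 := h2.dense_image (by fun_prop) h1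
    refine h3.mono ?_
    rintro _ ⟨t, ht, rfl⟩
    exact (hsub t ht _ ⟨0, rfl⟩).1
  have hc : Continuous H := H.monotone.continuous_of_denseRange hdense
  have hsurj := H.continuous_iff_surjective.1 hc
  choose G₀ hG₀ using hsurj
  refine ⟨⟨H, hc, semi, fun t => G₀ (Int.fract t) + ⌊t⌋, fun t => ?_, fun t => ?_⟩⟩
  · rw [H.map_add_int, hG₀, Int.fract_add_floor]
  · simp only [Int.fract_add_one, Int.floor_add_one]
    push_cast; ring

namespace SemiLin

variable {f : C1Diffeo} {ρ : ℝ} (S : SemiLin f ρ)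

lemma H_iterate (n : ℕ) (x : ℝ) : S.H (f.F^[n] x) = S.H x + n * ρ := by
  induction n with
  | zero => simp
  | succ n ih => rw [iterate_succ_apply', S.semi, ih]; push_cast; ring

lemma lt_of_H_lt {x y : ℝ} (h : S.H x < S.H y) : x < y := S.H.monotone.reflect_lt h

lemma strictMono_G : StrictMono S.G := fun s t h => S.lt_of_H_lt (by rwa [S.HG, S.HG])

end SemiLin

lemma GoodApprox.abs_lt {ρ : ℝ} {p : ℤ} {q : ℕ} (h : GoodApprox ρ p q) {i : ℕ} (hi : i < q) :
    |i * ρ - (i * p : ℤ) / (q : ℝ)| < 1 / q := by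
  have hq : (0 : ℝ) < q := by exact_mod_cast h.pos
  have hi' : (i : ℝ) < q := by exact_mod_cast hi
  have e : i * ρ - (i * p : ℤ) / (q : ℝ) = (i / q) * (q * ρ - p) := by
    push_cast; field_simp
  have h1 := h.approx
  have h2 : |(q : ℝ) * ρ - p| ≤ 1 / q := by rwa [le_div_iff₀ hq]
  rw [e, abs_mul, abs_of_nonneg (by positivity)]
  have h3 : (i : ℝ) / q < 1 := by rwa [div_lt_one hq]
  calc (i : ℝ) / q * |(q : ℝ) * ρ - p| ≤ (i : ℝ) / q * (1 / q) := by gcongr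
    _ < 1 * (1 / q) := by gcongr
    _ = 1 / q := one_mul _

variable {f : C1Diffeo} {ρ : ℝ}

/-- The integral of `φ` over the `j`-th of the blocks into which a fundamental domain is cut by
the `G`-images of `α + ℤ / q`. -/
def SemiLin.block (S : SemiLin f ρ) (φ : ℝ → ℝ) (α : ℝ) (q : ℕ) (j : ℤ) : ℝ :=
  ∫ x in (S.G (α + j / q))..(S.G (α + (j + 1 : ℤ) / q)), φ x

/-- The blocks of index `i * p + l` with `0 ≤ i < q` tile the circle. -/
lemma SemiLin.sum_block (S : SemiLin f ρ) {p : ℤ} {q : ℕ} (h : GoodApprox ρ p q) {φ : ℝ → ℝ}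
    (hφ : Continuous φ) (hper : Function.Periodic φ 1) (α : ℝ) (l : ℤ) :
    ∑ i ∈ Finset.range q, S.block φ α q (i * p + l) = ∫ x in (0 : ℝ)..1, φ x := by
  have hq : (q : ℝ) ≠ 0 := by exact_mod_cast h.pos.ne'
  rw [sum_residues h.pos h.coprime]
  · have := intervalIntegral.sum_integral_adjacent_intervals (μ := volume) (f := φ)
      (a := fun k : ℕ => S.G (α + k / q)) (n := q) (fun k _ => hφ.intervalIntegrable _ _)
    simp only [block]
    push_cast at this ⊢
    rw [this, div_self hq, S.G_add_one, zero_div, add_zero,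
      hper.intervalIntegral_add_eq _ 0, zero_add]
  · intro j
    simp only [block]
    have e1 : α + ((j + q : ℤ) : ℝ) / q = α + j / q + 1 := by push_cast; field_simp; ring
    have e2 : α + ((j + q + 1 : ℤ) : ℝ) / q = α + (j + 1 : ℤ) / q + 1 := by
      push_cast; field_simp; ring
    rw [e1, e2, S.G_add_one, S.G_add_one, ← intervalIntegral.integral_comp_add_right]
    simp only [hper _]

lemma integral_mono_Icc {φ : ℝ → ℝ} (hφ : Continuous φ) (h0 : ∀ x, 0 ≤ φ x) {a b c d : ℝ}
    (hca : c ≤ a) (hab : a ≤ b) (hbd : b ≤ d) : ∫ x in a..b, φ x ≤ ∫ x in c..d, φ x :=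
  intervalIntegral.integral_mono_interval hca hab hbd (Filter.Eventually.of_forall h0)
    (hφ.intervalIntegrable _ _)

/-- Bounded multiplicity: the first `q` images of an arc of `H`-length at most `K / q` cover each
point at most `K + 2` times. -/
lemma SemiLin.sum_integral_le (S : SemiLin f ρ) {p : ℤ} {q : ℕ} (h : GoodApprox ρ p q)
    {φ : ℝ → ℝ} (hφ : Continuous φ) (hper : Function.Periodic φ 1) (h0 : ∀ x, 0 ≤ φ x)
    {a b : ℝ} (hab : a ≤ b) (K : ℕ) (hK : S.H b - S.H a ≤ K / q) :
    ∑ i ∈ Finset.range q, ∫ x in (f.F^[i] a)..(f.F^[i] b), φ x ≤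
      (K + 2) * ∫ x in (0 : ℝ)..1, φ x := by
  have hq : (0 : ℝ) < q := by exact_mod_cast h.pos
  calc ∑ i ∈ Finset.range q, ∫ x in (f.F^[i] a)..(f.F^[i] b), φ x
      ≤ ∑ i ∈ Finset.range q, ∑ l ∈ Finset.range (K + 2),
          S.block φ (S.H a) q (i * p + (l - 1 : ℤ)) := by
        refine Finset.sum_le_sum fun i hi => ?_
        have h1 := abs_lt.1 (h.abs_lt (Finset.mem_range.1 hi))
        have e := intervalIntegral.sum_integral_adjacent_intervals (μ := volume) (f := φ)
          (a := fun l : ℕ => S.G (S.H a + (i * p + (l - 1 : ℤ) : ℤ) / q)) (n := K + 2)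
          (fun k _ => hφ.intervalIntegrable _ _)
        have e' : ∑ l ∈ Finset.range (K + 2), S.block φ (S.H a) q (i * p + (l - 1 : ℤ)) =
            ∫ x in (S.G (S.H a + (i * p + ((0 : ℕ) - 1 : ℤ) : ℤ) / q))..
              (S.G (S.H a + (i * p + ((K + 2 : ℕ) - 1 : ℤ) : ℤ) / q)), φ x := by
          rw [← e]
          refine Finset.sum_congr rfl fun l _ => ?_
          simp only [block]
          congr 4
          push_cast; ring
        rw [e']
        refine integral_mono_Icc hφ h0 (S.lt_of_H_lt ?_).le ((f.strictMono_iterate i).monotone hab)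
          (S.lt_of_H_lt ?_).le
        · rw [S.HG, S.H_iterate]
          have : ((i * p + ((0 : ℕ) - 1 : ℤ) : ℤ) : ℝ) / q = (i * p : ℤ) / (q : ℝ) - 1 / q := by
            push_cast; ring
          rw [this]; linarith
        · rw [S.HG, S.H_iterate]
          have : ((i * p + ((K + 2 : ℕ) - 1 : ℤ) : ℤ) : ℝ) / q =
            (i * p : ℤ) / (q : ℝ) + 1 / q + K / q := by
            push_cast; ring
          rw [this]; linarith
    _ = (K + 2) * ∫ x in (0 : ℝ)..1, φ x := by
        rw [Finset.sum_comm]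
        simp only [S.sum_block h hφ hper, Finset.sum_const, Finset.card_range, nsmul_eq_mul]
        push_cast; ring

/-- Covering: the first `q` images of an arc of `H`-length at least `3 / q` cover the circle. -/
lemma SemiLin.le_sum_integral (S : SemiLin f ρ) {p : ℤ} {q : ℕ} (h : GoodApprox ρ p q)
    {φ : ℝ → ℝ} (hφ : Continuous φ) (hper : Function.Periodic φ 1) (h0 : ∀ x, 0 ≤ φ x)
    {a b : ℝ} (hK : 3 / q ≤ S.H b - S.H a) :
    ∫ x in (0 : ℝ)..1, φ x ≤
      ∑ i ∈ Finset.range q, ∫ x in (f.F^[i] a)..(f.F^[i] b), φ x := by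
  have hq : (0 : ℝ) < q := by exact_mod_cast h.pos
  rw [← S.sum_block h hφ hper (S.H a) 1]
  refine Finset.sum_le_sum fun i hi => ?_
  have h1 := abs_lt.1 (h.abs_lt (Finset.mem_range.1 hi))
  have e1 : ((i * p + 1 : ℤ) : ℝ) / q = (i * p : ℤ) / (q : ℝ) + 1 / q := by
    push_cast; ring
  have e2 : ((i * p + 1 + 1 : ℤ) : ℝ) / q = (i * p : ℤ) / (q : ℝ) + 2 * (1 / q) := by
    push_cast; ring
  have e3 : (3 : ℝ) / q = 3 * (1 / q) := by ring
  have hpos : 0 < 1 / (q : ℝ) := by positivity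
  refine integral_mono_Icc hφ h0 (S.lt_of_H_lt ?_).le (S.strictMono_G.monotone ?_)
    (S.lt_of_H_lt ?_).le
  · rw [S.HG, S.H_iterate, e1]; linarith
  · rw [e1, e2]; linarith
  · rw [S.HG, S.H_iterate, e2]; linarith

end Combinatorics

/-! ### Distortion -/

section Distortion

/-- The total variation over one period of a `C¹` function of period one. -/
def totVar (w : ℝ → ℝ) : ℝ := ∫ x in (0 : ℝ)..1, |deriv w x|

lemma totVar_nonneg (w : ℝ → ℝ) : 0 ≤ totVar w :=
  intervalIntegral.integral_nonneg zero_le_one fun _ _ => abs_nonneg _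

lemma abs_sub_le_integral {w : ℝ → ℝ} (hw : ContDiff ℝ 1 w) {a b : ℝ} (hab : a ≤ b) :
    |w b - w a| ≤ ∫ x in a..b, |deriv w x| := by
  rw [← intervalIntegral.integral_deriv_eq_sub
    (fun x _ => (hw.differentiable one_ne_zero).differentiableAt)
    ((hw.continuous_deriv le_rfl).intervalIntegrable _ _)]
  exact intervalIntegral.abs_integral_le_integral_abs hab

variable {f : C1Diffeo} {ρ : ℝ}

/-- Denjoy's inequality: the oscillation of the Birkhoff sums of length at most `q` along an arc
of `H`-length at most `K / q` is controlled by the total variation, independently of `q`. -/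
lemma SemiLin.abs_birkhoffSum_sub_le (S : SemiLin f ρ) {p : ℤ} {q : ℕ} (h : GoodApprox ρ p q)
    {w : ℝ → ℝ} (hw : ContDiff ℝ 1 w) (hper : Function.Periodic w 1) {a b : ℝ} (K : ℕ)
    (hK : |S.H b - S.H a| ≤ K / q) {n : ℕ} (hn : n ≤ q) :
    |birkhoffSum f.F w n b - birkhoffSum f.F w n a| ≤ (K + 2) * totVar w := by
  wlog hab : a ≤ b generalizing a b
  · rw [abs_sub_comm]
    exact this (by rwa [abs_sub_comm]) (le_of_not_ge hab)
  have hmono : ∀ i, f.F^[i] a ≤ f.F^[i] b := fun i => (f.strictMono_iterate i).monotone hab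
  rw [birkhoffSum, birkhoffSum, ← Finset.sum_sub_distrib]
  calc _ ≤ ∑ i ∈ Finset.range n, |w (f.F^[i] b) - w (f.F^[i] a)| := Finset.abs_sum_le_sum_abs _ _
    _ ≤ ∑ i ∈ Finset.range n, ∫ x in (f.F^[i] a)..(f.F^[i] b), |deriv w x| :=
        Finset.sum_le_sum fun i _ => abs_sub_le_integral hw (hmono i)
    _ ≤ ∑ i ∈ Finset.range q, ∫ x in (f.F^[i] a)..(f.F^[i] b), |deriv w x| :=
        Finset.sum_le_sum_of_subset_of_nonneg (Finset.range_mono hn) fun i _ _ =>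
          intervalIntegral.integral_nonneg (hmono i) fun _ _ => abs_nonneg _
    _ ≤ (K + 2) * totVar w :=
        S.sum_integral_le h (hw.continuous_deriv le_rfl).abs
          (fun x => by simp only [hper.deriv' x]) (fun _ => abs_nonneg _) hab K
          ((le_abs_self _).trans hK)

lemma C1Diffeo.birkhoffSum_add_int (f : C1Diffeo) {w : ℝ → ℝ} (hper : Function.Periodic w 1)
    (n : ℕ) (x : ℝ) (m : ℤ) : birkhoffSum f.F w n (x + m) = birkhoffSum f.F w n x := by
  refine Finset.sum_congr rfl fun i _ => ?_
  rw [f.iterate_add_int]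
  simpa using hper.int_mul m (f.F^[i] x)

/-- The logarithm of the derivative of the lift of `f`. -/
def C1Diffeo.logD (f : C1Diffeo) (x : ℝ) : ℝ := Real.log (deriv f.F x)

lemma C1Diffeo.contDiff_logD (f : C1Diffeo) (hC2 : ContDiff ℝ 2 f.F) : ContDiff ℝ 1 f.logD := by
  have h1 : ContDiff ℝ 1 (deriv f.F) := by
    have : ContDiff ℝ (1 + 1) f.F := by norm_num; exact hC2
    exact (contDiff_succ_iff_deriv.1 this).2.2
  exact h1.log fun x => (f.deriv_pos x).ne'

lemma C1Diffeo.periodic_logD (f : C1Diffeo) : Function.Periodic f.logD 1 := fun x => by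
  simp only [logD, periodic_deriv_of_shift f.map_add_one x]

/-- The chain rule: the logarithm of the derivative of `f.F^[n]` is a Birkhoff sum. -/
lemma C1Diffeo.hasDerivAt_iterate (f : C1Diffeo) (n : ℕ) (x : ℝ) :
    HasDerivAt f.F^[n] (Real.exp (birkhoffSum f.F f.logD n x)) x := by
  induction n with
  | zero => simpa using hasDerivAt_id x
  | succ n ih =>
    rw [birkhoffSum_succ, Real.exp_add, iterate_succ', mul_comm]
    have h1 : HasDerivAt f.F (Real.exp (f.logD (f.F^[n] x))) (f.F^[n] x) := by
      rw [logD, Real.exp_log (f.deriv_pos _)]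
      exact ((f.contDiff.differentiable one_ne_zero).differentiableAt).hasDerivAt
    exact h1.comp x ih

lemma C1Diffeo.exists_slope (f : C1Diffeo) (n : ℕ) {a b : ℝ} (hab : a < b) :
    ∃ x ∈ Ioo a b, Real.exp (birkhoffSum f.F f.logD n x) =
      (f.F^[n] b - f.F^[n] a) / (b - a) :=
  exists_hasDerivAt_eq_slope _ _ hab
    (fun x _ => (f.hasDerivAt_iterate n x).continuousAt.continuousWithinAt)
    (fun x _ => f.hasDerivAt_iterate n x)

end Distortion

/-! ### Denjoy's theorem -/

section Denjoy

variable {f : C1Diffeo} {ρ : ℝ}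

lemma SemiLin.H_iterate_inv (S : SemiLin f ρ) (n : ℕ) (x : ℝ) :
    S.H (f.Finv^[n] x) = S.H x - n * ρ := by
  have := S.H_iterate n (f.Finv^[n] x)
  rw [f.right_inv.iterate n x] at this
  linarith

/-- The images of an arc collapsed by `H` have summable lengths. -/
lemma SemiLin.sum_length_le (S : SemiLin f ρ) {p : ℤ} {q : ℕ} (h : GoodApprox ρ p q) {a b : ℝ}
    (hab : a ≤ b) (hH : S.H a = S.H b) :
    ∑ i ∈ Finset.range q, (f.F^[i] b - f.F^[i] a) ≤ 2 := by
  have := S.sum_integral_le h (φ := fun _ => 1) continuous_const (fun _ => rfl)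
    (fun _ => zero_le_one) hab 0 (by simp [hH])
  simpa using this

/-- **Denjoy's theorem**: a `C²` diffeomorphism has no wandering arcs, so that the semiconjugacy
is injective. -/
lemma SemiLin.strictMono_H (S : SemiLin f ρ) (hC2 : ContDiff ℝ 2 f.F)
    (hex : ∀ N : ℕ, ∃ p q, N ≤ q ∧ GoodApprox ρ p q) : StrictMono S.H := by
  refine S.H.monotone.strictMono_of_injective ?_
  suffices hmain : ∀ a b : ℝ, a < b → S.H a ≠ S.H b by
    intro a b hab
    by_contra hne
    rcases lt_or_gt_of_ne hne with hlt | hlt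
    · exact hmain a b hlt hab
    · exact hmain b a hlt hab.symm
  intro a b hab hH
  have hinv : StrictMono f.Finv := by
    have hF := strictMono_of_deriv_pos f.deriv_pos
    intro x y hxy
    rw [← hF.lt_iff_lt, f.right_inv, f.right_inv]
    exact hxy
  have hfor : ∀ i, 0 < f.F^[i] b - f.F^[i] a := fun i => sub_pos.2 (f.strictMono_iterate i hab)
  have hbac : ∀ i, 0 < f.Finv^[i] b - f.Finv^[i] a := fun i => sub_pos.2 (hinv.iterate i hab)
  have hsum1 : Tendsto (fun i => f.F^[i] b - f.F^[i] a) atTop (𝓝 0) := by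
    refine (summable_of_sum_range_le (c := 2) (fun i => (hfor i).le) fun N => ?_).tendsto_atTop_zero
    obtain ⟨p, q, hNq, h⟩ := hex N
    exact (Finset.sum_le_sum_of_subset_of_nonneg (Finset.range_mono hNq)
      fun i _ _ => (hfor i).le).trans (S.sum_length_le h hab.le hH)
  have hsum2 : Tendsto (fun i => f.Finv^[i + 1] b - f.Finv^[i + 1] a) atTop (𝓝 0) := by
    refine (summable_of_sum_range_le (c := 2) (fun i => (hbac (i + 1)).le)
      fun N => ?_).tendsto_atTop_zero
    obtain ⟨p, q, hNq, h⟩ := hex N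
    refine (Finset.sum_le_sum_of_subset_of_nonneg (Finset.range_mono hNq)
      fun i _ _ => (hbac (i + 1)).le).trans ?_
    have := S.sum_length_le h (a := f.Finv^[q] a) (b := f.Finv^[q] b) (hinv.iterate q hab).le
      (by rw [S.H_iterate_inv, S.H_iterate_inv, hH])
    refine le_of_eq_of_le ?_ this
    rw [← Finset.sum_range_reflect]
    refine Finset.sum_congr rfl fun i hi => ?_
    have hi' := Finset.mem_range.1 hi
    have key : ∀ x, f.F^[i] (f.Finv^[q] x) = f.Finv^[q - 1 - i + 1] x := fun x => by
      have e : q = i + (q - 1 - i + 1) := by omega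
      conv_lhs => rw [e, iterate_add_apply]
      exact f.right_inv.iterate i _
    rw [key, key]
  rw [tendsto_add_atTop_iff_nat (f := fun i => f.Finv^[i] b - f.Finv^[i] a) 1] at hsum2
  -- The lengths of the images under `f ^ q` and `f ^ (-q)` tend to `0`, whereas bounded distortion
  -- keeps their product away from `0`.
  have hprod := hsum1.mul hsum2
  rw [mul_zero] at hprod
  have hpos : 0 < (b - a) ^ 2 * Real.exp (-(3 * totVar f.logD)) := by
    have := sub_pos.2 hab
    positivity
  obtain ⟨N, hN⟩ := eventually_atTop.1 (hprod.eventually_lt_const hpos)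
  obtain ⟨p, q, hNq, h⟩ := hex N
  have hlt := hN q hNq
  have hq : (0 : ℝ) < q := by exact_mod_cast h.pos
  obtain ⟨x, hx, hxe⟩ := f.exists_slope q hab
  obtain ⟨y, hy, hye⟩ := f.exists_slope q (hinv.iterate q hab)
  rw [f.right_inv.iterate q, f.right_inv.iterate q] at hye
  have hHx : S.H x = S.H a :=
    le_antisymm (hH ▸ S.H.monotone hx.2.le) (S.H.monotone hx.1.le)
  have hHy : S.H y = S.H a - q * ρ := by
    have h1 := S.H.monotone hy.1.le
    have h2 := S.H.monotone hy.2.le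
    rw [S.H_iterate_inv] at h1 h2
    linarith
  -- `y + p` is within `H`-distance `1 / q` of `x`, so the distortion estimate applies
  have hd := S.abs_birkhoffSum_sub_le h (f.contDiff_logD hC2) f.periodic_logD (a := x)
    (b := y + p) 1 (by
      rw [S.H.map_add_int, hHx, hHy]
      have e : S.H a - q * ρ + p - S.H a = -(q * ρ - p) := by ring
      rw [e, abs_neg, le_div_iff₀ hq]
      exact_mod_cast h.approx) le_rfl
  rw [f.birkhoffSum_add_int f.periodic_logD] at hd
  have hle : birkhoffSum f.F f.logD q y ≤ birkhoffSum f.F f.logD q x + 3 * totVar f.logD := by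
    have := (abs_le.1 hd).2
    push_cast at this
    linarith
  have hexp := Real.exp_le_exp.2 hle
  rw [Real.exp_add, hxe, hye] at hexp
  have hba := sub_pos.2 hab
  rw [div_mul_eq_mul_div, div_le_div_iff₀ (hbac q) hba] at hexp
  rw [Real.exp_neg, ← div_eq_mul_inv, lt_div_iff₀ (Real.exp_pos _)] at hlt
  nlinarith

/-- Uniform continuity of the inverse of `H`. -/
lemma SemiLin.exists_delta (S : SemiLin f ρ) (hS : StrictMono S.H) {η : ℝ} (hη : 0 < η) :
    ∃ δ > 0, ∀ s t, |S.H s - S.H t| ≤ δ → |s - t| ≤ η := by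
  have hcont : Continuous fun s => S.H (s + η) - S.H s := by
    have := S.cont
    fun_prop
  obtain ⟨x, -, hx⟩ := isCompact_Icc.exists_isMinOn (nonempty_Icc.2 (zero_le_one (α := ℝ)))
    hcont.continuousOn
  refine ⟨S.H (x + η) - S.H x, sub_pos.2 (hS (by linarith)), ?_⟩
  have hmin : ∀ s, S.H (x + η) - S.H x ≤ S.H (s + η) - S.H s := fun s => by
    have h1 := hx (a := Int.fract s) ⟨Int.fract_nonneg s, (Int.fract_lt_one s).le⟩
    have h2 := S.H.map_add_int (Int.fract s + η) ⌊s⌋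
    have h3 := S.H.map_add_int (Int.fract s) ⌊s⌋
    have e : Int.fract s + η + ⌊s⌋ = s + η := by rw [add_right_comm, Int.fract_add_floor]
    rw [e] at h2
    rw [Int.fract_add_floor] at h3
    simp only [mem_ofPred_eq] at h1
    linarith
  have key : ∀ s t, s + η < t → S.H (x + η) - S.H x < S.H t - S.H s := fun s t hst => by
    have := hS hst
    linarith [hmin s]
  intro s t hst
  have h1 := abs_le.1 hst
  rw [abs_le]
  constructor
  · by_contra hcon
    linarith [key s t (by linarith)]
  · by_contra hcon
    linarith [key t s (by linarith)]

end Denjoy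

/-! ### Contraction of the variation -/

section Contraction

variable {f : C1Diffeo} {ρ : ℝ}

lemma periodic_unifCont {φ : ℝ → ℝ} (hφ : Continuous φ) (hper : Function.Periodic φ 1)
    {ε : ℝ} (hε : 0 < ε) : ∃ η > 0, ∀ s t, |s - t| ≤ η → |φ s - φ t| ≤ ε := by
  have h1 := (isCompact_Icc (a := (-1 : ℝ)) (b := 2)).uniformContinuousOn_of_continuous
    hφ.continuousOn
  obtain ⟨δ, hδ, h2⟩ := Metric.uniformContinuousOn_iff.1 h1 ε hε
  refine ⟨min (δ / 2) 1, by positivity, fun s t hst => ?_⟩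
  have hs0 := Int.floor_le s
  have hs1 := Int.lt_floor_add_one s
  have h3 := abs_le.1 (hst.trans (min_le_right _ _))
  have h4 := hst.trans (min_le_left _ _)
  have e : ∀ r, φ (r - ⌊s⌋) = φ r := fun r => by
    simpa using hper.sub_int_mul_eq ⌊s⌋ (x := r)
  have := h2 (s - ⌊s⌋) ⟨by linarith, by linarith⟩ (t - ⌊s⌋) ⟨by linarith, by linarith⟩ (by
    rw [Real.dist_eq, sub_sub_sub_cancel_right]
    linarith)
  rw [Real.dist_eq, e, e] at this
  exact this.le

/-- The sum of the densities of the push-forwards of `φ(x) dx` under the first `n` iterates of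
the inverse diffeomorphism. -/
def C1Diffeo.transfer (f : C1Diffeo) (φ : ℝ → ℝ) (n : ℕ) (x : ℝ) : ℝ :=
  ∑ i ∈ Finset.range n, φ (f.F^[i] x) * Real.exp (birkhoffSum f.F f.logD i x)

lemma C1Diffeo.continuous_iterate (f : C1Diffeo) (n : ℕ) : Continuous f.F^[n] :=
  f.contDiff.continuous.iterate n

lemma C1Diffeo.continuous_birkhoffSum (f : C1Diffeo) {w : ℝ → ℝ} (hw : Continuous w) (n : ℕ) :
    Continuous (birkhoffSum f.F w n) :=
  continuous_finsetSum _ fun i _ => hw.comp (f.continuous_iterate i)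

lemma C1Diffeo.continuous_transfer (f : C1Diffeo) (hu : Continuous f.logD) {φ : ℝ → ℝ}
    (hφ : Continuous φ) (n : ℕ) : Continuous (f.transfer φ n) :=
  continuous_finsetSum _ fun i _ => (hφ.comp (f.continuous_iterate i)).mul
    (Real.continuous_exp.comp (f.continuous_birkhoffSum hu i))

lemma C1Diffeo.integral_transfer (f : C1Diffeo) (hu : Continuous f.logD) {φ : ℝ → ℝ}
    (hφ : Continuous φ) (hper : Function.Periodic φ 1) (n : ℕ) (s : ℝ) :
    ∫ x in s..s + 1, f.transfer φ n x = n * ∫ x in (0 : ℝ)..1, φ x := by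
  have hφ_int : ∀ i ∈ Finset.range n, IntervalIntegrable
      (fun x => φ (f.F^[i] x) * Real.exp (birkhoffSum f.F f.logD i x)) volume s (s + 1) :=
    fun i _ => Continuous.intervalIntegrable ((hφ.comp (f.continuous_iterate i)).mul
      (Real.continuous_exp.comp (f.continuous_birkhoffSum hu i))) _ _
  simp only [transfer]
  rw [intervalIntegral.integral_finsetSum hφ_int]
  have : ∀ i, ∫ x in s..s + 1, φ (f.F^[i] x) * Real.exp (birkhoffSum f.F f.logD i x) =
      ∫ x in (0 : ℝ)..1, φ x := fun i => by
    have := intervalIntegral.integral_comp_mul_deriv (a := s) (b := s + 1) (g := φ)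
      (fun x _ => f.hasDerivAt_iterate i x)
      (Real.continuous_exp.comp (f.continuous_birkhoffSum hu i)).continuousOn hφ
    simp only [Function.comp_def] at this
    rw [this]
    have e := f.iterate_add_int i s 1
    push_cast at e
    rw [e, hper.intervalIntegral_add_eq _ 0, zero_add]
  simp [this]

/-- Bounded distortion and the covering property bound the averaged density of `φ` from below on
an arc `[a, b]` whose `H`-length is comparable to `1 / q`. -/
lemma SemiLin.le_transfer (S : SemiLin f ρ) (hC2 : ContDiff ℝ 2 f.F) {p : ℤ} {q : ℕ}
    (h : GoodApprox ρ p q) {φ : ℝ → ℝ} (hφ : Continuous φ) (hper : Function.Periodic φ 1)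
    (h0 : ∀ x, 0 ≤ φ x) {δ : ℝ} (hδ0 : 0 ≤ δ)
    (hδ : ∀ s t, |S.H s - S.H t| ≤ 6 / q → |φ s - φ t| ≤ δ) {a b x : ℝ} (hab : a < b)
    (hx : x ∈ Icc a b) (hlo : 3 / q ≤ S.H b - S.H a) (hhi : S.H b - S.H a ≤ 6 / q) :
    (∫ y in (0 : ℝ)..1, φ y) - 8 * δ ≤
      Real.exp (8 * totVar f.logD) * (b - a) * f.transfer φ q x := by
  have hba := sub_pos.2 hab
  have hosc : ∀ s ∈ Icc a b, ∀ t ∈ Icc a b, |S.H s - S.H t| ≤ 6 / q := fun s hs t ht => by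
    have h1 := S.H.monotone hs.1
    have h2 := S.H.monotone hs.2
    have h3 := S.H.monotone ht.1
    have h4 := S.H.monotone ht.2
    rw [abs_le]; constructor <;> linarith
  have hterm : ∀ i ∈ Finset.range q, ∫ y in (f.F^[i] a)..(f.F^[i] b), φ y ≤
      Real.exp (8 * totVar f.logD) * (b - a) *
        (φ (f.F^[i] x) * Real.exp (birkhoffSum f.F f.logD i x)) +
      δ * (f.F^[i] b - f.F^[i] a) := by
    intro i hi
    have hlt := f.strictMono_iterate i hab
    have hmono := (f.strictMono_iterate i).monotone
    have hφ_int : ∫ y in (f.F^[i] a)..(f.F^[i] b), φ y ≤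
        (φ (f.F^[i] x) + δ) * (f.F^[i] b - f.F^[i] a) := by
      have hc : ∫ y in (f.F^[i] a)..(f.F^[i] b), (φ (f.F^[i] x) + δ) =
        (φ (f.F^[i] x) + δ) * (f.F^[i] b - f.F^[i] a) := by
        rw [intervalIntegral.integral_const, smul_eq_mul, mul_comm]
      rw [← hc]
      refine intervalIntegral.integral_mono_on hlt.le (hφ.intervalIntegrable _ _)
        (continuous_const.intervalIntegrable _ _) fun y hy => ?_
      have hH : |S.H y - S.H (f.F^[i] x)| ≤ 6 / q := by
        have h1 := S.H.monotone hy.1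
        have h2 := S.H.monotone hy.2
        have h3 := S.H.monotone hx.1
        have h4 := S.H.monotone hx.2
        rw [S.H_iterate] at h1 h2 ⊢
        rw [abs_le]; constructor <;> linarith
      linarith [(abs_le.1 (hδ _ _ hH)).2]
    obtain ⟨z, hz, hze⟩ := f.exists_slope i hab
    have hd := S.abs_birkhoffSum_sub_le h (f.contDiff_logD hC2) f.periodic_logD (a := x) (b := z)
      6 (by exact_mod_cast hosc z ⟨hz.1.le, hz.2.le⟩ x hx) (Finset.mem_range.1 hi).le
    have hle : birkhoffSum f.F f.logD i z ≤ 8 * totVar f.logD + birkhoffSum f.F f.logD i x := by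
      have := (abs_le.1 hd).2
      push_cast at this
      linarith
    have hexp := Real.exp_le_exp.2 hle
    rw [Real.exp_add, hze, div_le_iff₀ hba] at hexp
    have := mul_le_mul_of_nonneg_left hexp (h0 (f.F^[i] x))
    linarith
  have h1 := (S.le_sum_integral h hφ hper h0 hlo).trans (Finset.sum_le_sum hterm)
  rw [Finset.sum_add_distrib, ← Finset.mul_sum, ← Finset.mul_sum] at h1
  have h2 := S.sum_integral_le h (φ := fun _ => 1) continuous_const (fun _ => rfl)
    (fun _ => zero_le_one) hab.le 6 (by exact_mod_cast hhi)
  simp only [intervalIntegral.integral_const, smul_eq_mul, mul_one] at h2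
  have h3 := mul_le_mul_of_nonneg_left h2 hδ0
  push_cast at h3
  simp only [C1Diffeo.transfer]
  linarith

/-- The Birkhoff average of `w` along the first `q` points of the orbit. -/
def C1Diffeo.avg (f : C1Diffeo) (q : ℕ) (w : ℝ → ℝ) (x : ℝ) : ℝ :=
  (q : ℝ)⁻¹ * birkhoffSum f.F w q x

lemma C1Diffeo.contDiff_iterate (f : C1Diffeo) (n : ℕ) : ContDiff ℝ 1 f.F^[n] := by
  induction n with
  | zero => exact contDiff_id
  | succ n ih =>
    rw [iterate_succ']
    exact f.contDiff.comp ih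

lemma C1Diffeo.contDiff_avg (f : C1Diffeo) (q : ℕ) {w : ℝ → ℝ} (hw : ContDiff ℝ 1 w) :
    ContDiff ℝ 1 (f.avg q w) :=
  contDiff_const.mul (ContDiff.sum fun i _ => hw.comp (f.contDiff_iterate i))

lemma C1Diffeo.periodic_birkhoffSum (f : C1Diffeo) (q : ℕ) {w : ℝ → ℝ}
    (hper : Function.Periodic w 1) : Function.Periodic (birkhoffSum f.F w q) 1 := fun x => by
  simpa using f.birkhoffSum_add_int hper q x 1

lemma C1Diffeo.deriv_avg (f : C1Diffeo) (q : ℕ) {w : ℝ → ℝ} (hw : ContDiff ℝ 1 w) (x : ℝ) :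
    deriv (f.avg q w) x = (q : ℝ)⁻¹ * f.transfer (deriv w) q x := by
  refine HasDerivAt.deriv (HasDerivAt.const_mul _ ?_)
  refine HasDerivAt.fun_sum fun i _ => ?_
  exact HasDerivAt.comp x
    ((hw.differentiable one_ne_zero).differentiableAt (x := f.F^[i] x)).hasDerivAt
    (f.hasDerivAt_iterate i x)

/-- Averaging along the orbit contracts the total variation by a definite factor. On every arc of
`H`-length comparable to `1 / q`, the averaged densities of the positive and of the negative part
of `deriv w` are both bounded below, hence they partially cancel. -/
lemma SemiLin.exists_avg_contract (S : SemiLin f ρ) (hC2 : ContDiff ℝ 2 f.F)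
    (hex : ∀ N : ℕ, ∃ p q, N ≤ q ∧ GoodApprox ρ p q) {w : ℝ → ℝ} (hw : ContDiff ℝ 1 w)
    (hper : Function.Periodic w 1) (hpos : 0 < totVar w) :
    ∃ q : ℕ, 0 < q ∧
      totVar (f.avg q w) ≤ (1 - Real.exp (-(8 * totVar f.logD)) / 12) * totVar w := by
  have hS := S.strictMono_H hC2 hex
  have hu : Continuous f.logD := (f.contDiff_logD hC2).continuous
  set V := totVar w with hV
  have hcw : Continuous (deriv w) := hw.continuous_deriv le_rfl
  have hpw : Function.Periodic (deriv w) 1 := hper.deriv'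
  obtain ⟨η, hη, hη'⟩ := periodic_unifCont hcw hpw (ε := V / 32) (by positivity)
  obtain ⟨δ, hδ, hδ'⟩ := S.exists_delta hS hη
  obtain ⟨p, q, hqN, h⟩ := hex (max 3 ⌈6 / δ⌉₊)
  have hq3 : 3 ≤ q := (le_max_left _ _).trans hqN
  have hq : (0 : ℝ) < q := by exact_mod_cast h.pos
  have hqδ : 6 / (q : ℝ) ≤ δ := by
    have h1 : 6 / δ ≤ q := (Nat.le_ceil _).trans (by exact_mod_cast (le_max_right _ _).trans hqN)
    rw [div_le_iff₀ hδ] at h1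
    rw [div_le_iff₀ hq]; linarith
  have hclose : ∀ s t, |S.H s - S.H t| ≤ 6 / q → |deriv w s - deriv w t| ≤ V / 32 :=
    fun s t hst => hη' s t (hδ' s t (hst.trans hqδ))
  refine ⟨q, h.pos, ?_⟩
  -- the positive and negative parts of `deriv w`
  set φ : ℝ → ℝ := fun x => max (deriv w x) 0 with hφ
  set ψ : ℝ → ℝ := fun x => max (-deriv w x) 0 with hψ
  have hφc : Continuous φ := hcw.max continuous_const
  have hψc : Continuous ψ := hcw.neg.max continuous_const
  have hφp : Function.Periodic φ 1 := fun x => by simp only [hφ, hpw x]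
  have hψp : Function.Periodic ψ 1 := fun x => by simp only [hψ, hpw x]
  have hadd : ∀ x, φ x + ψ x = |deriv w x| := fun x => by
    simp only [hφ, hψ]
    rcases le_total 0 (deriv w x) with h0 | h0
    · rw [max_eq_left h0, max_eq_right (by linarith), abs_of_nonneg h0, add_zero]
    · rw [max_eq_right h0, max_eq_left (by linarith), abs_of_nonpos h0, zero_add]
  have hsub : ∀ x, φ x - ψ x = deriv w x := fun x => by
    simp only [hφ, hψ]
    rcases le_total 0 (deriv w x) with h0 | h0
    · rw [max_eq_left h0, max_eq_right (by linarith), sub_zero]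
    · rw [max_eq_right h0, max_eq_left (by linarith)]; ring
  have hI1 : (∫ x in (0 : ℝ)..1, φ x) + ∫ x in (0 : ℝ)..1, ψ x = V := by
    rw [← intervalIntegral.integral_add (hφc.intervalIntegrable _ _) (hψc.intervalIntegrable _ _)]
    simp only [hadd]; rfl
  have hI2 : (∫ x in (0 : ℝ)..1, φ x) - ∫ x in (0 : ℝ)..1, ψ x = 0 := by
    rw [← intervalIntegral.integral_sub (hφc.intervalIntegrable _ _) (hψc.intervalIntegrable _ _)]
    simp only [hsub]
    rw [intervalIntegral.integral_deriv_eq_sub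
      (fun x _ => (hw.differentiable one_ne_zero).differentiableAt) (hcw.intervalIntegrable _ _)]
    have := hper 0
    rw [zero_add] at this
    linarith
  have hφδ : ∀ s t, |S.H s - S.H t| ≤ 6 / q → |φ s - φ t| ≤ V / 32 := fun s t hst =>
    (abs_max_sub_max_le_abs _ _ _).trans (hclose s t hst)
  have hψδ : ∀ s t, |S.H s - S.H t| ≤ 6 / q → |ψ s - ψ t| ≤ V / 32 := fun s t hst =>
    (abs_max_sub_max_le_abs _ _ _).trans (by
      rw [neg_sub_neg, abs_sub_comm]; exact hclose s t hst)
  set P := f.transfer φ q with hP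
  set Q := f.transfer ψ q with hQ
  have hPc : Continuous P := f.continuous_transfer hu hφc q
  have hQc : Continuous Q := f.continuous_transfer hu hψc q
  have hadd_c : Continuous fun x => P x + Q x := hPc.add hQc
  have habs_c : Continuous fun x => |P x - Q x| := (hPc.sub hQc).abs
  have hPQ : ∀ x, f.transfer (deriv w) q x = P x - Q x := fun x => by
    simp only [hP, hQ, C1Diffeo.transfer, ← Finset.sum_sub_distrib, ← sub_mul, hsub]
  set C := 8 * totVar f.logD with hC
  -- cancellation on one arc
  have harc : ∀ a b, a < b → 3 / q ≤ S.H b - S.H a → S.H b - S.H a ≤ 6 / q →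
      ∫ x in a..b, |P x - Q x| ≤ (∫ x in a..b, (P x + Q x)) - V / 2 * Real.exp (-C) := by
    intro a b hab hlo hhi
    have hba := sub_pos.2 hab
    have hpt : ∀ x ∈ Icc a b,
        |P x - Q x| ≤ (P x + Q x) - V / 2 * Real.exp (-C) / (b - a) := by
      intro x hx
      have h1 := S.le_transfer hC2 h hφc hφp (fun _ => le_max_right _ _) (by positivity) hφδ hab hx
        hlo hhi
      have h2 := S.le_transfer hC2 h hψc hψp (fun _ => le_max_right _ _) (by positivity) hψδ hab hx
        hlo hhi
      have key : ∀ T, V / 4 ≤ Real.exp C * (b - a) * T → V / 4 * Real.exp (-C) / (b - a) ≤ T := by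
        intro T hT
        rw [Real.exp_neg, ← div_eq_mul_inv, div_div, div_le_iff₀ (by positivity)]
        linarith
      have h3 := key (P x) (by linarith)
      have h4 := key (Q x) (by linarith)
      have e : V / 2 * Real.exp (-C) / (b - a) = 2 * (V / 4 * Real.exp (-C) / (b - a)) := by ring
      rw [e, abs_le]
      constructor <;> linarith
    have h1 : ∫ x in a..b, ((P x + Q x) - V / 2 * Real.exp (-C) / (b - a)) =
        (∫ x in a..b, (P x + Q x)) - V / 2 * Real.exp (-C) := by
      rw [intervalIntegral.integral_sub (hadd_c.intervalIntegrable _ _)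
        (continuous_const.intervalIntegrable _ _), intervalIntegral.integral_const, smul_eq_mul,
        mul_div_cancel₀ _ hba.ne']
    rw [← h1]
    exact intervalIntegral.integral_mono_on hab.le (habs_c.intervalIntegrable _ _)
      ((hadd_c.sub continuous_const).intervalIntegrable _ _) hpt
  -- cut a fundamental domain into `M` arcs of `H`-length `1 / M`
  set M := q / 3 with hM
  have hM1 : 3 * M ≤ q := by omega
  have hM2 : q ≤ 6 * M := by omega
  have hM1' : 3 * (M : ℝ) ≤ q := by exact_mod_cast hM1
  have hM2' : (q : ℝ) ≤ 6 * M := by exact_mod_cast hM2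
  have hM0 : (0 : ℝ) < M := by linarith
  have hstep : ∀ k : ℕ, S.H (S.G ((k + 1 : ℕ) / M)) - S.H (S.G (k / M)) = 1 / M := fun k => by
    rw [S.HG, S.HG]; push_cast; ring
  have hsum : ∫ x in (S.G 0)..(S.G 0 + 1), |P x - Q x| ≤
      (∫ x in (S.G 0)..(S.G 0 + 1), (P x + Q x)) - M * (V / 2 * Real.exp (-C)) := by
    have e : S.G 0 + 1 = S.G ((M : ℕ) / M) := by
      rw [div_self hM0.ne', ← S.G_add_one, zero_add]
    have e0 : S.G 0 = S.G ((0 : ℕ) / M) := by simp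
    rw [e, e0]
    rw [← intervalIntegral.sum_integral_adjacent_intervals (a := fun k : ℕ => S.G (k / M))
        fun k _ => habs_c.intervalIntegrable _ _,
      ← intervalIntegral.sum_integral_adjacent_intervals (a := fun k : ℕ => S.G (k / M))
        fun k _ => hadd_c.intervalIntegrable _ _]
    have hc : (M : ℝ) * (V / 2 * Real.exp (-C)) =
        ∑ k ∈ Finset.range M, V / 2 * Real.exp (-C) := by simp
    rw [hc, ← Finset.sum_sub_distrib]
    refine Finset.sum_le_sum fun k _ => harc _ _ (S.strictMono_G ?_) ?_ ?_
    · push_cast; gcongr; linarith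
    · rw [hstep, div_le_div_iff₀ hq hM0]; linarith
    · rw [hstep, div_le_div_iff₀ hM0 hq]; linarith
  rw [intervalIntegral.integral_add (hPc.intervalIntegrable _ _) (hQc.intervalIntegrable _ _),
    f.integral_transfer hu hφc hφp, f.integral_transfer hu hψc hψp, ← mul_add, hI1] at hsum
  have hvar : totVar (f.avg q w) = (q : ℝ)⁻¹ * ∫ x in (S.G 0)..(S.G 0 + 1), |P x - Q x| := by
    have hperA : Function.Periodic (fun x => |deriv (f.avg q w) x|) 1 := fun x => by
      have hA : Function.Periodic (f.avg q w) 1 := fun y => by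
        simp only [C1Diffeo.avg, f.periodic_birkhoffSum q hper y]
      simp only [hA.deriv' x]
    have := hperA.intervalIntegral_add_eq 0 (S.G 0)
    rw [zero_add] at this
    rw [totVar, this, ← intervalIntegral.integral_const_mul]
    simp only [f.deriv_avg q hw, hPQ, abs_mul, abs_of_pos (inv_pos.2 hq)]
  rw [hvar, inv_mul_le_iff₀ hq]
  refine hsum.trans ?_
  have hE := Real.exp_pos (-C)
  have : 0 ≤ (6 * M - q : ℝ) * (V * Real.exp (-C)) :=
    mul_nonneg (by linarith) (by positivity)
  linarith

/-- `log Df` is continuously cohomologous to `C¹` functions of arbitrarily small variation. -/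
lemma SemiLin.exists_cohomologous (S : SemiLin f ρ) (hC2 : ContDiff ℝ 2 f.F)
    (hex : ∀ N : ℕ, ∃ p q, N ≤ q ∧ GoodApprox ρ p q) {ε : ℝ} (hε : 0 < ε) :
    ∃ w v : ℝ → ℝ, ContDiff ℝ 1 w ∧ Function.Periodic w 1 ∧ totVar w < ε ∧ Continuous v ∧
      Function.Periodic v 1 ∧ ∀ x, f.logD x = w x + v x - v (f.F x) := by
  set r := 1 - Real.exp (-(8 * totVar f.logD)) / 12 with hr
  have hr1 : r < 1 := by have := Real.exp_pos (-(8 * totVar f.logD)); linarith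
  have hr0 : 0 ≤ r := by
    have : Real.exp (-(8 * totVar f.logD)) ≤ 1 := by
      rw [Real.exp_le_one_iff]; linarith [totVar_nonneg f.logD]
    linarith
  have hstep : ∀ k : ℕ, ∃ w v : ℝ → ℝ, ContDiff ℝ 1 w ∧ Function.Periodic w 1 ∧
      totVar w ≤ r ^ k * totVar f.logD ∧ Continuous v ∧ Function.Periodic v 1 ∧
      ∀ x, f.logD x = w x + v x - v (f.F x) := by
    intro k
    induction k with
    | zero =>
      exact ⟨f.logD, fun _ => 0, f.contDiff_logD hC2, f.periodic_logD, by simp, continuous_const,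
        fun _ => rfl, by simp⟩
    | succ k ih =>
      obtain ⟨w, v, hw, hwp, hwv, hv, hvp, hwv'⟩ := ih
      rcases (totVar_nonneg w).eq_or_lt with h0 | hpos
      · exact ⟨w, v, hw, hwp, by rw [← h0]; have := totVar_nonneg f.logD; positivity, hv, hvp, hwv'⟩
      · obtain ⟨q, hq, hle⟩ := S.exists_avg_contract hC2 hex hw hwp hpos
        have hq' : (q : ℝ) ≠ 0 := by exact_mod_cast hq.ne'
        refine ⟨f.avg q w,
          fun x => v x + (q : ℝ)⁻¹ * ∑ i ∈ Finset.range q, birkhoffSum f.F w i x,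
          f.contDiff_avg q hw, fun x => ?_, ?_, ?_, fun x => ?_, fun x => ?_⟩
        · simp only [C1Diffeo.avg, f.periodic_birkhoffSum q hwp x]
        · calc totVar (f.avg q w) ≤ r * totVar w := hle
            _ ≤ r * (r ^ k * totVar f.logD) := by gcongr
            _ = r ^ (k + 1) * totVar f.logD := by ring
        · exact hv.add (continuous_const.mul
            (continuous_finsetSum _ fun i _ => f.continuous_birkhoffSum hw.continuous i))
        · simp only [hvp x, f.periodic_birkhoffSum _ hwp x]
        · have hsum : ∑ i ∈ Finset.range q, birkhoffSum f.F w i (f.F x) -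
              ∑ i ∈ Finset.range q, birkhoffSum f.F w i x = birkhoffSum f.F w q x - q * w x := by
            rw [← Finset.sum_sub_distrib]
            simp only [birkhoffSum_apply_sub_birkhoffSum, Finset.sum_sub_distrib, Finset.sum_const,
              Finset.card_range, nsmul_eq_mul]
            rfl
          rw [hwv' x, C1Diffeo.avg]
          have := congrArg (fun t => (q : ℝ)⁻¹ * t) hsum
          simp only [mul_sub, inv_mul_cancel_left₀ hq'] at this
          linarith
  have hlim : Tendsto (fun k : ℕ => r ^ k * totVar f.logD) atTop (𝓝 0) := by
    simpa using (tendsto_pow_atTop_nhds_zero_of_lt_one hr0 hr1).mul_const (totVar f.logD)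
  obtain ⟨k, hk⟩ := (hlim.eventually_lt_const hε).exists
  obtain ⟨w, v, hw, hwp, hwv, rest⟩ := hstep k
  exact ⟨w, v, hw, hwp, hwv.trans_lt hk, rest⟩

end Contraction

/-! ### Convergence of the iterates -/

section Convergence

variable {f : C1Diffeo} {ρ : ℝ}

lemma birkhoffSum_cohomologous {u w v : ℝ → ℝ} {F : ℝ → ℝ}
    (h : ∀ x, u x = w x + v x - v (F x)) (n : ℕ) (x : ℝ) :
    birkhoffSum F u n x = birkhoffSum F w n x + v x - v (F^[n] x) := by
  induction n with
  | zero => simp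
  | succ n ih =>
    rw [birkhoffSum_succ, birkhoffSum_succ, ih, h, iterate_succ_apply']
    ring

/-- Every real number is, modulo `1`, within `2 / q` of one of `0, ρ, …, (q - 1) ρ`. -/
lemma GoodApprox.exists_close {p : ℤ} {q : ℕ} (h : GoodApprox ρ p q) (t : ℝ) :
    ∃ i < q, ∃ m : ℤ, |t - i * ρ - m| ≤ 2 / q := by
  have hq : (0 : ℝ) < q := by exact_mod_cast h.pos
  have hqz : (0 : ℤ) < q := by exact_mod_cast h.pos
  obtain ⟨a, b, hab⟩ := h.coprime
  set r := round (t * q) with hr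
  have hi0 := Int.emod_nonneg (r * a) hqz.ne'
  have hi1 := Int.emod_lt_of_pos (r * a) hqz
  have hdiv := Int.emod_add_mul_ediv (r * a) q
  obtain ⟨i, hi⟩ := Int.eq_ofNat_of_zero_le hi0
  have hiq : i < q := by omega
  refine ⟨i, hiq, r * b + p * (r * a / q), ?_⟩
  have hm : r = i * p + q * (r * b + p * (r * a / q)) := by
    rw [hi] at hdiv
    linear_combination (-r) * hab - p * hdiv
  have hm' : (r : ℝ) / q = (i * p : ℤ) / (q : ℝ) + (r * b + p * (r * a / q) : ℤ) := by
    have : (r : ℝ) = (i * p : ℤ) + q * (r * b + p * (r * a / q) : ℤ) := by exact_mod_cast hm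
    rw [div_eq_iff hq.ne', add_mul, div_mul_cancel₀ _ hq.ne']
    linarith
  have h1 := _root_.abs_lt.1 (h.abs_lt hiq)
  have h2 : |t - r / q| ≤ 1 / q := by
    have := abs_sub_round (t * q)
    have e : t - r / q = (t * q - r) / q := by field_simp
    rw [e, abs_div, abs_of_pos hq]
    gcongr
    linarith
  have h3 := abs_le.1 h2
  have e2 : (2 : ℝ) / q = 2 * (1 / q) := by ring
  rw [hm'] at h3
  rw [e2, abs_le]
  constructor <;> linarith

/-- The iterate `f.F^[q]` is close to the translation by `p`. -/
lemma SemiLin.displacement_le (S : SemiLin f ρ) (hS : StrictMono S.H) {ε : ℝ} (hε : 0 < ε) :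
    ∃ N : ℕ, ∀ p q, N ≤ q → GoodApprox ρ p q → ∀ y, |f.F^[q] y - y - p| ≤ ε := by
  obtain ⟨δ, hδ, hδ'⟩ := S.exists_delta hS hε
  refine ⟨⌈1 / δ⌉₊, fun p q hqN h y => ?_⟩
  have hq : (0 : ℝ) < q := by exact_mod_cast h.pos
  have h1 : 1 / δ ≤ q := (Nat.le_ceil _).trans (by exact_mod_cast hqN)
  rw [div_le_iff₀ hδ] at h1
  have := hδ' (f.F^[q] y) (y + p) (by
    rw [S.H_iterate, S.H.map_add_int, add_sub_add_left_eq_sub]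
    have h2 := h.approx
    rw [← le_div_iff₀ hq] at h2
    refine h2.trans ?_
    rw [div_le_iff₀ hq]; linarith)
  rwa [sub_sub]

/-- The Birkhoff sums of `log Df` of length `q` are uniformly small. They vanish at some point
`x₀` by the mean value theorem, and an arbitrary point is reached from a point close to `x₀`
by fewer than `q` iterations. -/
lemma SemiLin.birkhoffSum_le (S : SemiLin f ρ) (hC2 : ContDiff ℝ 2 f.F)
    (hex : ∀ N : ℕ, ∃ p q, N ≤ q ∧ GoodApprox ρ p q) {ε : ℝ} (hε : 0 < ε) :
    ∃ N : ℕ, ∀ p q, N ≤ q → GoodApprox ρ p q → ∀ y, |birkhoffSum f.F f.logD q y| ≤ ε := by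
  have hS := S.strictMono_H hC2 hex
  obtain ⟨w, v, hw, hwp, hwε, hv, hvp, hcoh⟩ :=
    S.exists_cohomologous hC2 hex (ε := ε / 16) (by positivity)
  obtain ⟨η, hη, hη'⟩ := periodic_unifCont hv hvp (ε := ε / 8) (by positivity)
  obtain ⟨δ, hδ, hδ'⟩ := S.exists_delta hS hη
  refine ⟨⌈2 / δ⌉₊, fun p q hqN h y => ?_⟩
  have hq : (0 : ℝ) < q := by exact_mod_cast h.pos
  have hqδ : 2 / (q : ℝ) ≤ δ := by
    have h1 : 2 / δ ≤ q := (Nat.le_ceil _).trans (by exact_mod_cast hqN)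
    rw [div_le_iff₀ hδ] at h1
    rw [div_le_iff₀ hq]; linarith
  have hshort : ∀ a b, |S.H b - S.H a| ≤ 2 / q → ∀ n ≤ q,
      |birkhoffSum f.F f.logD n b - birkhoffSum f.F f.logD n a| ≤ ε / 2 := by
    intro a b hab n hn
    have h1 := abs_le.1 (S.abs_birkhoffSum_sub_le h hw hwp 2 (by exact_mod_cast hab) hn)
    have h2 := abs_le.1 (hη' _ _ (hδ' b a (hab.trans hqδ)))
    have h3 := abs_le.1 (hη' _ _ (hδ' (f.F^[n] b) (f.F^[n] a) (by
      rw [S.H_iterate, S.H_iterate, add_sub_add_right_eq_sub]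
      exact hab.trans hqδ)))
    push_cast at h1
    rw [birkhoffSum_cohomologous hcoh, birkhoffSum_cohomologous hcoh, abs_le]
    constructor <;> linarith
  obtain ⟨x₀, -, hx₀⟩ := f.exists_slope q (zero_lt_one (α := ℝ))
  have hzero : birkhoffSum f.F f.logD q x₀ = 0 := by
    have e := f.iterate_add_int q 0 1
    push_cast at e
    rw [zero_add] at e
    rw [e, sub_zero, div_one, add_sub_cancel_left, Real.exp_eq_one_iff] at hx₀
    exact hx₀
  obtain ⟨i, hi, m, him⟩ := h.exists_close (S.H y - S.H x₀)
  obtain ⟨z, hz⟩ : ∃ z, f.F^[i] z = y + (-m : ℤ) := ⟨_, f.right_inv.iterate i _⟩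
  have hHz : S.H z = S.H y - i * ρ - m := by
    have := S.H_iterate i z
    rw [hz, S.H.map_add_int] at this
    push_cast at this
    linarith
  have h1 := hshort x₀ z (by
    rw [hHz]
    have e : S.H y - i * ρ - m - S.H x₀ = S.H y - S.H x₀ - i * ρ - m := by ring
    rwa [e]) q le_rfl
  have h2 := hshort z (f.F^[q] z + (-p : ℤ)) (by
    rw [S.H.map_add_int, S.H_iterate]
    have e : S.H z + q * ρ + (-p : ℤ) - S.H z = q * ρ - p := by push_cast; ring
    have h3 := h.approx
    rw [← le_div_iff₀ hq] at h3
    rw [e]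
    refine h3.trans ?_
    gcongr
    norm_num) i hi.le
  rw [f.birkhoffSum_add_int f.periodic_logD] at h2
  have h3 := birkhoffSum_add f.F f.logD i q z
  rw [add_comm i q, birkhoffSum_add, hz, f.birkhoffSum_add_int f.periodic_logD] at h3
  have h1' := abs_le.1 h1
  have h2' := abs_le.1 h2
  rw [abs_le]
  constructor <;> linarith

lemma C1Diffeo.toCircle_iterate (f : C1Diffeo) (n : ℕ) (x : ℝ) :
    f.toCircle^[n] (x : 𝕊) = ((f.F^[n] x : ℝ) : 𝕊) := by
  induction n with
  | zero => rfl
  | succ n ih => rw [iterate_succ_apply', ih, iterate_succ_apply']; rfl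

lemma C1Diffeo.DfIter_coe (f : C1Diffeo) (n : ℕ) (x : ℝ) :
    f.DfIter n (x : 𝕊) = Real.exp (birkhoffSum f.F f.logD n x) :=
  (f.hasDerivAt_iterate n x).deriv

end Convergence

/-- **Herman's theorem.** For a `C²` circle diffeomorphism `f` of irrational rotation number
`ρ` with convergent denominators `(q_k)`, the iterates `f^{q_k}` converge to the identity in
the `C¹` topology. -/
theorem herman_iterates_tendsto_id
    (f : C1Diffeo) (hC2 : ContDiff ℝ 2 f.F)
    (ρ : ℝ) (hρ : Irrational ρ) (hrot : f.rot = ρ)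
    (q : ℕ → ℕ) (hq : ∀ k, (q k : ℝ) = (GenContFract.of ρ).dens k) :
    TendstoUniformly (fun k x => f.toCircle^[q k] x) id atTop ∧
      TendstoUniformly (fun k x => f.DfIter (q k) x) (fun _ => 1) atTop := by
  have hq_lim := tendsto_dens hρ q hq
  have hgood := fun k => goodApprox_of_dens hρ k (q k) (hq k)
  have hex : ∀ N : ℕ, ∃ p n, N ≤ n ∧ GoodApprox ρ p n := fun N => by
    obtain ⟨k, hk⟩ := (hq_lim.eventually_ge_atTop N).exists
    obtain ⟨p, hp⟩ := hgood k
    exact ⟨p, q k, hk, hp⟩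
  obtain ⟨S⟩ := exists_semiLin f hρ hrot
  constructor
  · rw [Metric.tendstoUniformly_iff]
    intro ε hε
    obtain ⟨N, hN⟩ := S.displacement_le (S.strictMono_H hC2 hex) (half_pos hε)
    filter_upwards [hq_lim.eventually_ge_atTop N] with k hk x
    obtain ⟨p, hp⟩ := hgood k
    induction x using QuotientAddGroup.induction_on with
    | H x =>
      have h1 := hN p (q k) hk hp x
      have e := f.toCircle_iterate (q k) x
      have e2 : ((f.F^[q k] x : ℝ) : 𝕊) - (x : 𝕊) = ((f.F^[q k] x - x - p : ℝ) : 𝕊) := by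
        have h0 : ((p : ℝ) : 𝕊) = 0 := (AddCircle.coe_eq_zero_iff 1).2 ⟨p, by simp⟩
        rw [AddCircle.coe_sub, AddCircle.coe_sub, h0, sub_zero]
      rw [dist_comm, id, dist_eq_norm]
      change ‖f.toCircle^[q k] (x : 𝕊) - (x : 𝕊)‖ < ε
      rw [e, e2]
      have h2 : ‖((f.F^[q k] x - x - p : ℝ) : 𝕊)‖ ≤ |f.F^[q k] x - x - p| :=
        QuotientAddGroup.norm_mk_le_norm
      linarith
  · rw [Metric.tendstoUniformly_iff]
    intro ε hε
    obtain ⟨δ, hδ, hδ_exp⟩ := Metric.continuousAt_iff.1 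
      (Real.continuous_exp.continuousAt (x := 0)) ε hε
    obtain ⟨N, hN⟩ := S.birkhoffSum_le hC2 hex (half_pos hδ)
    filter_upwards [hq_lim.eventually_ge_atTop N] with k hk x
    obtain ⟨p, hp⟩ := hgood k
    induction x using QuotientAddGroup.induction_on with
    | H x =>
      have h1 := hN p (q k) hk hp x
      have h2 := hδ_exp (x := birkhoffSum f.F f.logD (q k) x) (by
        rw [Real.dist_eq, sub_zero]; linarith)
      rw [Real.exp_zero] at h2
      rw [dist_comm]
      have e := f.DfIter_coe (q k) x
      change dist (f.DfIter (q k) (x : 𝕊)) 1 < ε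
      rwa [e]
end
end

section
/- For every irrational number ρ (mod 1), there exists an orientation-preserving C^1 circle diffeomorphism f with rotation number ρ such that f is minimal and f admits an f-invariant 1-distribution that is not a scalar multiple of integration against the unique f-invariant probability measure. -/
/-!
The distribution is `L u = ∑_{n ∈ ℤ} D(fⁿ)(x₀) u'(fⁿ x₀)`. As soon as the weights `D(fⁿ)(x₀)` are
summable, `L` is continuous for the `C¹` topology and invariant by the chain rule; it kills constants,
so it can only be proportional to the invariant measure if it vanishes, which is excluded because
an atomic measure is not Lebesgue measure. It remains to find a minimal `C¹` diffeomorphism of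
rotation number `ρ` with a point `x₀` such that `∑ D(fⁿ)(x₀) < ∞`.

Write `R` for the rotation by `ρ`. If `φ` is continuous and `w ≥ 1` is integrable on the circle with
`w ∘ R = exp φ · w` almost everywhere, then the normalized primitive `H` of `w` is a circle
homeomorphism, and `f = H ∘ R ∘ H⁻¹` is a `C¹` diffeomorphism with derivative `exp (φ ∘ H⁻¹)`
(`hasDerivAt_conj`); it is minimal and has rotation number `ρ` since it is conjugate to `R`. With
`x₀ = H 0`, the weights `p n = D(fⁿ)(x₀)` satisfy `p (n + 1) = p n * exp (φ (n ρ))`. So `φ` must have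
both an integrable density and a summable weight on the orbit of `0` (`exists_weights`).

Such a `φ` is a series of coboundaries `∑ (u_k ∘ R - u_k)`, where `u_k` is a bump of height
`C_k = u_k(0) = k log 4`, centred on the orbit points `n ρ`, `|n| < 2^k`, whose height decays so
slowly along the orbit that `|u_k ∘ R - u_k| ≤ ε_k` with `∑ ε_k < ∞` (`exists_spike`). Taking the bumps
narrow enough, `∑ u_k` converges almost everywhere and `w = exp (∑ u_k)` is integrable, although
`∑ u_k` diverges at `0`. On the orbit, `p n = exp (∑ (u_k(n ρ) - C_k))` with nonpositive terms, and
narrowness also gives `u_k(n ρ) = 0` for `2^k ≤ |n| < 2^(k+1)`, whence `p n ≤ 4^(-k) ≤ 4 / n²`.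
-/

open MeasureTheory Function Filter Set
open scoped Topology

noncomputable section

/-! ### Bumps along an orbit of the rotation -/

/-- The distance from `y` to the orbit `{n ρ}` of `0` in the circle, where reaching the `n`-th
point of the orbit costs `ε |n|` and moving along the circle costs `D` per unit of length. -/
def orbitDist (ρ ε D y : ℝ) : ℝ :=
  ⨅ n : ℤ, (ε * |(n : ℝ)| + D * ‖((y - n * ρ : ℝ) : UnitAddCircle)‖)

lemma orbitDist_bddBelow {ρ ε D : ℝ} (hε : 0 ≤ ε) (hD : 0 ≤ D) (y : ℝ) :
    BddBelow (range fun n : ℤ => ε * |(n : ℝ)| + D * ‖((y - n * ρ : ℝ) : UnitAddCircle)‖) :=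
  ⟨0, by rintro _ ⟨n, rfl⟩; positivity⟩

lemma orbitDist_le_add {ρ ε D : ℝ} (hε : 0 ≤ ε) (hD : 0 ≤ D) (y z K : ℝ)
    (h : ∀ n : ℤ, ∃ m : ℤ, ε * |(m : ℝ)| + D * ‖((y - m * ρ : ℝ) : UnitAddCircle)‖ ≤
      ε * |(n : ℝ)| + D * ‖((z - n * ρ : ℝ) : UnitAddCircle)‖ + K) :
    orbitDist ρ ε D y ≤ orbitDist ρ ε D z + K := by
  rw [← sub_le_iff_le_add]
  refine le_ciInf fun n => ?_
  obtain ⟨m, hm⟩ := h n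
  have := ciInf_le (orbitDist_bddBelow (ρ := ρ) hε hD y) m
  unfold orbitDist
  linarith

/-- The orbit is invariant under the rotation, so rotating `j` times costs at most `ε |j|`. -/
lemma orbitDist_shift_le {ρ ε D : ℝ} (hε : 0 ≤ ε) (hD : 0 ≤ D) (y : ℝ) (j : ℤ) :
    orbitDist ρ ε D (y + j * ρ) ≤ orbitDist ρ ε D y + ε * |(j : ℝ)| := by
  refine orbitDist_le_add hε hD _ _ _ fun n => ⟨n + j, ?_⟩
  have h1 : y + j * ρ - ((n + j : ℤ) : ℝ) * ρ = y - n * ρ := by push_cast; ring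
  rw [h1]
  have h2 : |((n + j : ℤ) : ℝ)| ≤ |(n : ℝ)| + |(j : ℝ)| := by push_cast; exact abs_add_le _ _
  nlinarith

lemma orbitDist_lipschitz {ρ ε D : ℝ} (hε : 0 ≤ ε) (hD : 0 ≤ D) (y z : ℝ) :
    orbitDist ρ ε D y ≤ orbitDist ρ ε D z + D * |y - z| := by
  refine orbitDist_le_add hε hD _ _ _ fun n => ⟨n, ?_⟩
  have h1 : ((y - n * ρ : ℝ) : UnitAddCircle) =
      ((z - n * ρ : ℝ) : UnitAddCircle) + ((y - z : ℝ) : UnitAddCircle) := by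
    rw [← AddCircle.coe_add]; congr 1; ring
  have h2 : ‖((y - z : ℝ) : UnitAddCircle)‖ ≤ |y - z| := by
    exact QuotientAddGroup.norm_mk_le_norm
  have h3 := norm_add_le ((z - n * ρ : ℝ) : UnitAddCircle) ((y - z : ℝ) : UnitAddCircle)
  rw [← h1] at h3
  nlinarith

lemma max_sub_le {C a b K : ℝ} (h1 : a ≤ b + K) (h2 : b ≤ a + K) :
    |max (C - a) 0 - max (C - b) 0| ≤ K := by
  refine (abs_max_sub_max_le_abs _ _ _).trans ?_
  rw [abs_le]; constructor <;> linarith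

/-- A continuous bump of height at most `C` around the finitely many orbit points `n ρ` with
`ε |n| < C`; it gets narrower as `D` grows. -/
def spike (ρ C ε D y : ℝ) : ℝ := max (C - orbitDist ρ ε D y) 0

lemma spike_continuous {ρ C ε D : ℝ} (hε : 0 ≤ ε) (hD : 0 ≤ D) :
    Continuous (spike ρ C ε D) := by
  refine LipschitzWith.continuous (K := ⟨D, hD⟩) (LipschitzWith.of_dist_le_mul fun y z => ?_)
  refine max_sub_le (orbitDist_lipschitz hε hD y z) ?_
  have := orbitDist_lipschitz (ρ := ρ) hε hD z y
  rwa [abs_sub_comm] at this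

lemma spike_eventually_zero {ρ C ε y : ℝ} (hε : 0 < ε)
    (hy : ∀ n : ℤ, ε * |(n : ℝ)| < C → ((y - n * ρ : ℝ) : UnitAddCircle) ≠ 0) :
    ∀ᶠ D : ℕ in atTop, spike ρ C ε D y = 0 := by
  have hfin : {n : ℤ | ε * |(n : ℝ)| < C}.Finite := by
    refine (Set.finite_Icc (-⌈C / ε⌉) ⌈C / ε⌉).subset fun n hn => ?_
    have h1 : |(n : ℝ)| < C / ε := by
      rw [lt_div_iff₀ hε, mul_comm]; exact hn
    have h2 : |(n : ℝ)| < (⌈C / ε⌉ : ℝ) := h1.trans_le (Int.le_ceil _)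
    rw [abs_lt] at h2
    exact ⟨by exact_mod_cast h2.1.le, by exact_mod_cast h2.2.le⟩
  have h : ∀ᶠ D : ℕ in atTop, ∀ n ∈ {n : ℤ | ε * |(n : ℝ)| < C},
      C ≤ D * ‖((y - n * ρ : ℝ) : UnitAddCircle)‖ := by
    rw [eventually_all_finite hfin]
    intro n hn
    have := (tendsto_natCast_atTop_atTop (R := ℝ)).atTop_mul_const (norm_pos_iff.2 (hy n hn))
    exact this.eventually_ge_atTop C
  filter_upwards [h] with D hD
  refine max_eq_right (sub_nonpos.2 (le_ciInf fun n => ?_))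
  by_cases hn : ε * |(n : ℝ)| < C
  · have := hD n hn
    have : 0 ≤ ε * |(n : ℝ)| := by positivity
    linarith
  · have : 0 ≤ (D : ℝ) * ‖((y - n * ρ : ℝ) : UnitAddCircle)‖ := by positivity
    linarith

lemma spike_nonneg (ρ C ε D y : ℝ) : 0 ≤ spike ρ C ε D y := le_max_right _ _

lemma spike_le {ρ C ε D : ℝ} (hC : 0 ≤ C) (hε : 0 ≤ ε) (hD : 0 ≤ D) (y : ℝ) :
    spike ρ C ε D y ≤ C := by
  have : 0 ≤ orbitDist ρ ε D y := le_ciInf fun n => by positivity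
  exact max_le (by linarith) hC

lemma coe_irr_ne_zero {ρ : ℝ} (hρ : Irrational ρ) {n : ℤ} (hn : n ≠ 0) :
    ((n * ρ : ℝ) : UnitAddCircle) ≠ 0 := by
  intro h
  rw [AddCircle.coe_eq_zero_iff] at h
  obtain ⟨m, hm⟩ := h
  have : Irrational (n * ρ) := hρ.intCast_mul hn
  exact this.ne_int m (by simpa using hm.symm)

/-- Narrow bumps of height `C` at `0`, varying by at most `ε` along the rotation, of
arbitrarily small integral, and vanishing on any prescribed finite part of the orbit outside the
window `ε |n| < C`. -/
lemma exists_spike {ρ : ℝ} (hρ : Irrational ρ) {C ε η : ℝ} (hC : 0 ≤ C) (hε : 0 < ε)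
    (hη : 0 < η) (l : ℕ) :
    ∃ u : ℝ → ℝ, Continuous u ∧ (∀ y, u (y + 1) = u y) ∧ (∀ y, 0 ≤ u y) ∧ (∀ y, u y ≤ C) ∧
      u 0 = C ∧ (∀ y, ∀ j : ℤ, |u (y + j * ρ) - u y| ≤ ε * |(j : ℝ)|) ∧
      (∀ n : ℤ, C ≤ ε * |(n : ℝ)| → |n| ≤ l → u (n * ρ) = 0) ∧
      ∫ y in (0 : ℝ)..1, u y ≤ η := by
  have hint : ∀ᶠ D : ℕ in atTop, ∫ y in (0 : ℝ)..1, spike ρ C ε D y < η := by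
    have hcount : ∀ᵐ y : ℝ, ∀ n : ℤ, ((y - n * ρ : ℝ) : UnitAddCircle) ≠ 0 := by
      rw [ae_all_iff]
      intro n
      have : (range fun m : ℤ => (m : ℝ) + n * ρ).Countable := countable_range _
      filter_upwards [this.ae_notMem volume] with y hy h
      rw [AddCircle.coe_eq_zero_iff] at h
      obtain ⟨m, hm⟩ := h
      exact hy ⟨m, by simp at hm; simp [hm]⟩
    have ht : Tendsto (fun D : ℕ => ∫ y in (0 : ℝ)..1, spike ρ C ε D y) atTop
        (𝓝 (∫ _ in (0 : ℝ)..1, (0 : ℝ))) := by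
      refine intervalIntegral.tendsto_integral_filter_of_dominated_convergence (fun _ => C)
        (Eventually.of_forall fun D =>
          (spike_continuous hε.le D.cast_nonneg).aestronglyMeasurable)
        (Eventually.of_forall fun D => Eventually.of_forall fun y _ => ?_)
        (by simp) ?_
      · rw [Real.norm_of_nonneg (spike_nonneg _ _ _ _ _)]
        exact spike_le hC hε.le D.cast_nonneg y
      · filter_upwards [hcount] with y hy _
        exact tendsto_nhds_of_eventually_eq (spike_eventually_zero hε fun n _ => hy n)
    rw [intervalIntegral.integral_zero] at ht
    exact ht.eventually_lt_const hη
  have horb : ∀ᶠ D : ℕ in atTop, ∀ n ∈ {n : ℤ | C ≤ ε * |(n : ℝ)| ∧ |n| ≤ l},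
      spike ρ C ε D (n * ρ) = 0 := by
    have hfin : {n : ℤ | C ≤ ε * |(n : ℝ)| ∧ |n| ≤ l}.Finite :=
      (Set.finite_Icc (-(l : ℤ)) l).subset fun n hn => abs_le.1 hn.2
    rw [eventually_all_finite hfin]
    intro n hn
    refine spike_eventually_zero hε fun j hj => ?_
    have hnj : n - j ≠ 0 := by
      intro h
      rw [sub_eq_zero.1 h] at hn
      exact absurd hn.1 (not_le.2 hj)
    have := coe_irr_ne_zero hρ hnj
    push_cast at this
    rwa [sub_mul] at this
  obtain ⟨D, hD1, hD2⟩ := (hint.and horb).exists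
  have hD : (0 : ℝ) ≤ D := D.cast_nonneg
  refine ⟨spike ρ C ε D, spike_continuous hε.le hD, fun y => ?_, spike_nonneg _ _ _ _,
    spike_le hC hε.le hD, ?_, fun y j => ?_, fun n h1 h2 => hD2 n ⟨h1, h2⟩, hD1.le⟩
  · have : ∀ n : ℤ, ((y + 1 - n * ρ : ℝ) : UnitAddCircle) = ((y - n * ρ : ℝ) : UnitAddCircle) := by
      intro n
      rw [add_sub_right_comm]; exact AddCircle.coe_add_period 1 _
    simp only [spike, orbitDist, this]
  · have h0 : orbitDist ρ ε D 0 ≤ 0 := by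
      have := ciInf_le (orbitDist_bddBelow (ρ := ρ) hε.le hD 0) 0
      simpa only [orbitDist, Int.cast_zero, abs_zero, mul_zero, zero_mul, sub_zero, zero_add,
        AddCircle.coe_zero, norm_zero] using this
    refine le_antisymm (spike_le hC hε.le hD 0) (le_max_of_le_left (by linarith))
  · refine max_sub_le (orbitDist_shift_le hε.le hD y j) ?_
    have := orbitDist_shift_le (ρ := ρ) hε.le hD (y + j * ρ) (-j)
    push_cast at this
    rw [abs_neg] at this
    convert this using 2
    ring

/-! ### The cocycle, its density and its summable weight -/

lemma ae_of_periodic {P : ℝ → Prop} (hP : Function.Periodic P 1)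
    (h : ∀ᵐ y ∂volume.restrict (Ioc (0 : ℝ) 1), P y) : ∀ᵐ y : ℝ, P y := by
  rw [ae_restrict_iff' measurableSet_Ioc, ae_iff] at h
  rw [ae_iff]
  have hsub : {y | ¬ P y} ⊆ ⋃ n : ℤ, (fun y : ℝ => y + n) ⁻¹' {y | ¬ (y ∈ Ioc (0 : ℝ) 1 → P y)} := by
    intro y hy
    obtain ⟨n, hn, -⟩ := existsUnique_add_zsmul_mem_Ioc (zero_lt_one (α := ℝ)) y 0
    simp only [zsmul_eq_mul, mul_one, zero_add] at hn
    have := hP.int_mul n y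
    rw [mul_one] at this
    exact mem_iUnion.2 ⟨n, fun h => hy (this ▸ h hn)⟩
  refine measure_mono_null hsub (measure_iUnion_null fun n => ?_)
  rw [measure_preimage_add_right]
  exact h

/-- Telescoping `exp (s + u) - exp s ≤ exp (s + u) * u`; it turns integrability of a rapidly
convergent series of bumps into integrability of the exponential of their sum. -/
lemma exp_sum_le {u C : ℕ → ℝ} (h0 : ∀ k, 0 ≤ u k) (hC : ∀ k, u k ≤ C k) (K : ℕ) :
    Real.exp (∑ k ∈ Finset.range K, u k) ≤
      1 + ∑ k ∈ Finset.range K, Real.exp (∑ j ∈ Finset.range (k + 1), C j) * u k := by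
  induction K with
  | zero => simp
  | succ K ih =>
    rw [Finset.sum_range_succ, Finset.sum_range_succ (fun k => _ * u k), Real.exp_add]
    have h1 : Real.exp (u K) ≤ 1 + u K * Real.exp (u K) := by
      have := Real.add_one_le_exp (-u K)
      have h5 : Real.exp (-u K) * Real.exp (u K) = 1 := by rw [← Real.exp_add]; simp
      nlinarith [Real.exp_pos (u K)]
    have h2 : Real.exp (∑ k ∈ Finset.range K, u k) * Real.exp (u K) ≤
        Real.exp (∑ j ∈ Finset.range (K + 1), C j) := by
      rw [← Real.exp_add, ← Finset.sum_range_succ]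
      exact Real.exp_le_exp.2 (Finset.sum_le_sum fun k _ => hC k)
    have h3 := mul_le_mul_of_nonneg_left h1 (Real.exp_pos (∑ k ∈ Finset.range K, u k)).le
    have h4 := mul_le_mul_of_nonneg_right h2 (h0 K)
    linarith

/-- A continuous cocycle `exp ∘ φ` over the rotation that is realised both by an integrable
density `w` and by a summable weight `p` on the orbit of `0`. With `u k` the bumps of
`exists_spike` of heights `C k = k log 4`, these are `w = exp (∑ u k)`,
`φ y = ∑ (u k (y + ρ) - u k y)` and `p n = exp (∑ (u k (n ρ) - u k 0))`. -/
theorem exists_weights {ρ : ℝ} (hρ : Irrational ρ) :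
    ∃ (w φ : ℝ → ℝ) (p : ℤ → ℝ), (∀ y, 1 ≤ w y) ∧ (∀ y, w (y + 1) = w y) ∧
      IntervalIntegrable w volume 0 1 ∧ Continuous φ ∧
      (∀ᵐ y, w (y + ρ) = Real.exp (φ y) * w y) ∧
      (∀ᵐ y, w (y - ρ) = Real.exp (-φ (y - ρ)) * w y) ∧
      p 0 = 1 ∧ (∀ n, 0 ≤ p n) ∧ Summable p ∧
      ∀ n : ℤ, p (n + 1) = p n * Real.exp (φ (n * ρ)) := by
  set l := Real.log 4 with hl
  have hl0 : 0 < l := Real.log_pos (by norm_num)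
  set C : ℕ → ℝ := fun k => k * l with hC
  have hC0 : ∀ k, 0 ≤ C k := fun k => by positivity
  set ε : ℕ → ℝ := fun k => (k + 1) * l * (1 / 2) ^ k with hε
  have hε0 : ∀ k, 0 < ε k := fun k => by positivity
  have hεs : Summable ε := by
    have h1 : Summable fun k : ℕ => (k : ℝ) ^ 1 * (1 / 2 : ℝ) ^ k :=
      summable_pow_mul_geometric_of_norm_lt_one 1 (by norm_num)
    have h2 : Summable fun k : ℕ => (1 / 2 : ℝ) ^ k := summable_geometric_two
    refine ((h1.add h2).mul_left l).congr fun k => ?_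
    simp only [hε]; ring
  set A : ℕ → ℝ := fun k => Real.exp (∑ j ∈ Finset.range (k + 1), C j) with hA
  have hA1 : ∀ k, 1 ≤ A k := fun k => Real.one_le_exp (Finset.sum_nonneg fun j _ => hC0 j)
  have hA0 : ∀ k, 0 < A k := fun k => Real.exp_pos _
  choose u ucont uper u0 uC uz ush uvan uint using fun k : ℕ =>
    exists_spike hρ (hC0 k) (hε0 k) (η := (1 / 2) ^ k / A k) (div_pos (by positivity) (hA0 k))
      (2 ^ (k + 1))
  -- The series of `w` may diverge, but that of `φ` converges uniformly, by the slow variation.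
  have φs : ∀ (y : ℝ) (j : ℤ), Summable fun k => u k (y + j * ρ) - u k y := fun y j =>
    Summable.of_norm_bounded (hεs.mul_right _) fun k => ush k y j
  have φs1 : ∀ y : ℝ, Summable fun k => u k (y + ρ) - u k y := fun y => by simpa using φs y 1
  set φ : ℝ → ℝ := fun y => ∑' k, (u k (y + ρ) - u k y) with hφ
  have φc : Continuous φ := by
    refine continuous_tsum (fun k => ?_) hεs fun k y => ?_
    · exact ((ucont k).comp (continuous_add_const ρ)).sub (ucont k)
    · simpa using ush k y 1
  set w : ℝ → ℝ := fun y => Real.exp (∑' k, u k y) with hw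
  have wstep : ∀ y, Summable (fun k => u k y) → w (y + ρ) = Real.exp (φ y) * w y := by
    intro y hy
    simp only [hw, hφ]
    rw [← Real.exp_add, ← (φs1 y).tsum_add hy]
    simp
  -- Where `∑ u k` diverges, `w` takes the junk value `1`; this only happens on a null set, as the
  -- integrals of `A k * u k` are summable.
  set V : ℝ → ENNReal := fun y => ∑' k, ENNReal.ofReal (A k * u k y) with hV
  have Vm : Measurable V := Measurable.tsum fun k =>
    ((ucont k).measurable.const_mul _).ennreal_ofReal
  have Vint : ∫⁻ y in Ioc (0 : ℝ) 1, V y ≠ ⊤ := by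
    rw [lintegral_tsum fun k => ((ucont k).measurable.const_mul _).ennreal_ofReal.aemeasurable]
    have h1 : ∀ k, ∫⁻ y in Ioc (0 : ℝ) 1, ENNReal.ofReal (A k * u k y) ≤
        ENNReal.ofReal ((1 / 2) ^ k) := by
      intro k
      rw [← ofReal_integral_eq_lintegral_ofReal, ← intervalIntegral.integral_of_le zero_le_one,
        intervalIntegral.integral_const_mul]
      · refine ENNReal.ofReal_le_ofReal ?_
        rw [mul_comm, ← le_div_iff₀ (hA0 k)]
        exact uint k
      · exact ((ucont k).const_mul _).continuousOn.integrableOn_Icc.mono_set Ioc_subset_Icc_self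
      · exact Eventually.of_forall fun y => mul_nonneg (hA0 k).le (u0 k y)
    refine ne_top_of_le_ne_top ?_ (ENNReal.tsum_le_tsum h1)
    exact summable_geometric_two.tsum_ofReal_ne_top
  have Vfin : ∀ y, V y < ⊤ → Summable fun k => A k * u k y := by
    intro y hy
    refine (ENNReal.summable_toReal hy.ne).congr fun k => ?_
    exact ENNReal.toReal_ofReal (mul_nonneg (hA0 k).le (u0 k y))
  have Asum : ∀ y, (Summable fun k => A k * u k y) → Summable fun k => u k y := fun y hy =>
    hy.of_nonneg_of_le (fun k => u0 k y) fun k => le_mul_of_one_le_left (u0 k y) (hA1 k)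
  have good01 : ∀ᵐ y ∂volume.restrict (Ioc (0 : ℝ) 1), V y < ⊤ := ae_lt_top Vm Vint
  have good : ∀ᵐ y : ℝ, Summable fun k => u k y := by
    refine ae_of_periodic (fun y => ?_) (good01.mono fun y hy => Asum y (Vfin y hy))
    simp only [uper]
  have wm : Measurable w := by
    exact Real.measurable_exp.comp (Measurable.tsum fun k => (ucont k).measurable)
  have wint : IntervalIntegrable w volume 0 1 := by
    rw [intervalIntegrable_iff_integrableOn_Ioc_of_le zero_le_one]
    have hVi : Integrable (fun y => 1 + (V y).toReal) (volume.restrict (Ioc (0 : ℝ) 1)) :=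
      (integrable_const 1).add (integrable_toReal_of_lintegral_ne_top Vm.aemeasurable Vint)
    refine hVi.mono' wm.aestronglyMeasurable ?_
    filter_upwards [good01] with y hy
    have hs := Vfin y hy
    rw [Real.norm_of_nonneg (Real.exp_pos _).le]
    have hVy : (V y).toReal = ∑' k, A k * u k y := by
      rw [hV, ENNReal.tsum_toReal_eq fun k => ENNReal.ofReal_ne_top]
      exact tsum_congr fun k => ENNReal.toReal_ofReal (mul_nonneg (hA0 k).le (u0 k y))
    rw [hVy]
    refine le_of_tendsto ((Real.continuous_exp.tendsto _).comp
      (Asum y hs).hasSum.tendsto_sum_nat) (Eventually.of_forall fun K => ?_)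
    refine (exp_sum_le (fun k => u0 k y) (fun k => uC k y) K).trans ?_
    gcongr
    exact hs.sum_le_tsum _ fun k _ => mul_nonneg (hA0 k).le (u0 k y)
  have ps : ∀ n : ℤ, Summable fun k => u k (n * ρ) - C k := fun n => by
    simpa [uz] using φs 0 n
  set p : ℤ → ℝ := fun n => Real.exp (∑' k, (u k (n * ρ) - C k)) with hp
  have hp0 : ∀ n, 0 ≤ p n := fun n => (Real.exp_pos _).le
  have pbound : ∀ n : ℤ, n ≠ 0 → p n ≤ 4 * (1 / (n : ℝ) ^ 2) := by
    intro n hn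
    -- For `2 ^ k ≤ |n| < 2 ^ (k + 1)` the `k`-th bump vanishes at `n ρ`, so the `k`-th term of the
    -- series is `-C k`, and all the other terms are nonpositive.
    set k := Nat.log 2 n.natAbs with hk
    have hlow : 2 ^ k ≤ n.natAbs := Nat.pow_log_le_self 2 (by omega)
    have hupp : n.natAbs < 2 ^ (k + 1) := Nat.lt_pow_succ_log_self (by norm_num) _
    have habs : |(n : ℝ)| = (n.natAbs : ℝ) := by rw [Nat.cast_natAbs]; simp
    have hlow' : (2 : ℝ) ^ k ≤ |(n : ℝ)| := by rw [habs]; exact_mod_cast hlow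
    have hupp' : |(n : ℝ)| ≤ (2 : ℝ) ^ (k + 1) := by rw [habs]; exact_mod_cast hupp.le
    have hvan : u k (n * ρ) = 0 := by
      refine uvan k n ?_ (by rw [Int.abs_eq_natAbs]; exact_mod_cast hupp.le)
      calc C k ≤ (k + 1) * l := by simp only [hC]; nlinarith
        _ = ε k * 2 ^ k := by
          simp only [hε]; rw [mul_assoc, ← mul_pow]; norm_num
        _ ≤ ε k * |(n : ℝ)| := by gcongr
    have h1 : ∑' k, (u k (n * ρ) - C k) ≤ -C k := by
      have := (ps n).neg.sum_le_tsum {k} fun j _ => by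
        have := uC j (n * ρ); linarith
      rw [Finset.sum_singleton, tsum_neg, hvan] at this
      linarith
    have h2 : p n ≤ ((4 : ℝ) ^ k)⁻¹ := by
      calc p n ≤ Real.exp (-C k) := Real.exp_le_exp.2 h1
        _ = ((4 : ℝ) ^ k)⁻¹ := by
          simp only [hC]
          rw [Real.exp_neg, Real.exp_nat_mul, hl, Real.exp_log (by norm_num)]
    have h3 : (n : ℝ) ^ 2 ≤ 4 * 4 ^ k := by
      calc (n : ℝ) ^ 2 = |(n : ℝ)| ^ 2 := (sq_abs _).symm
        _ ≤ (2 ^ (k + 1)) ^ 2 := by gcongr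
        _ = 4 * 4 ^ k := by
          rw [← pow_mul, mul_comm (k + 1), pow_mul]; norm_num; ring
    have hn2 : (0 : ℝ) < (n : ℝ) ^ 2 := by positivity
    refine h2.trans ?_
    rw [mul_one_div, inv_eq_one_div, div_le_div_iff₀ (by positivity) hn2]
    linarith
  have psum : Summable p := by
    have h1 : Summable fun n : ℤ => 4 * (1 / (n : ℝ) ^ 2) :=
      (Real.summable_one_div_int_pow.2 one_lt_two).mul_left 4
    refine Summable.of_norm_bounded_eventually h1 ?_
    filter_upwards [(Set.finite_singleton (0 : ℤ)).compl_mem_cofinite] with n hn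
    rw [Real.norm_of_nonneg (hp0 n)]
    exact pbound n hn
  refine ⟨w, φ, p, fun y => Real.one_le_exp (tsum_nonneg fun k => u0 k y), fun y => ?_, wint, φc,
    good.mono wstep, ?_, ?_, hp0, psum, fun n => ?_⟩
  · simp only [hw, uper]
  · filter_upwards [good] with y hy
    have h1 : Summable fun k => u k (y - ρ) := by
      have := φs y (-1)
      refine (this.add hy).congr fun k => ?_
      push_cast
      rw [neg_one_mul, ← sub_eq_add_neg, sub_add_cancel]
    have h2 := wstep _ h1
    rw [sub_add_cancel] at h2
    rw [h2, ← mul_assoc, ← Real.exp_add]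
    simp
  · simp [hp, uz]
  · simp only [hp, hφ]
    rw [← Real.exp_add, ← (ps n).tsum_add (φs1 _)]
    congr 1
    refine tsum_congr fun k => ?_
    push_cast
    rw [add_mul, one_mul]
    ring

/-! ### Conjugating the rotation by a primitive -/

/-- If `w dy` is multiplied by the continuous function `exp ∘ ψ` under the translation by `s`,
then conjugating this translation by a primitive `H` of `w / Z` gives a differentiable map. Its
derivative is computed by comparing the integrals of `w (y + s)` and `w y` over a small interval,
on which `exp ∘ ψ` is nearly constant. -/
lemma hasDerivAt_conj {w ψ H h : ℝ → ℝ} {s Z : ℝ} (hZ : 0 < Z)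
    (wint : ∀ a b, IntervalIntegrable w volume a b) (w0 : ∀ y, 0 ≤ w y)
    (hH : ∀ a b, H b - H a = (∫ y in a..b, w y) / Z) (hc : Continuous h)
    (hr : ∀ x, H (h x) = x) (ψc : Continuous ψ)
    (hw : ∀ᵐ y, w (y + s) = Real.exp (ψ y) * w y) (x : ℝ) :
    HasDerivAt (fun x => H (h x + s)) (Real.exp (ψ (h x))) x := by
  rw [hasDerivAt_iff_isLittleO, Asymptotics.isLittleO_iff]
  intro c hcpos
  obtain ⟨r, hr0, hrc⟩ := Metric.continuousAt_iff.1
    ((Real.continuous_exp.comp ψc).continuousAt (x := h x)) c hcpos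
  filter_upwards [Metric.continuousAt_iff'.1 (hc.continuousAt (x := x)) r hr0] with x' hx'
  have hx : x' - x = (∫ y in h x..h x', w y) / Z := by rw [← hH, hr, hr]
  have wint' : IntervalIntegrable (fun y => w (y + s)) volume (h x) (h x') := by
    simpa using (wint (h x + s) (h x' + s)).comp_add_right s
  have hdiff : H (h x' + s) - H (h x + s) - (x' - x) • Real.exp (ψ (h x)) =
      (∫ y in h x..h x', (w (y + s) - Real.exp (ψ (h x)) * w y)) / Z := by
    rw [hH, hx, intervalIntegral.integral_sub wint' ((wint _ _).const_mul _),
      intervalIntegral.integral_const_mul, intervalIntegral.integral_comp_add_right, smul_eq_mul]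
    ring
  have hbound : ‖∫ y in h x..h x', (w (y + s) - Real.exp (ψ (h x)) * w y)‖ ≤
      |∫ y in h x..h x', c * w y| := by
    refine intervalIntegral.norm_integral_le_abs_of_norm_le ?_ ((wint _ _).const_mul c)
    rw [ae_restrict_iff' measurableSet_uIoc]
    filter_upwards [hw] with y hy hmem
    rw [hy, ← sub_mul, norm_mul, Real.norm_of_nonneg (w0 y)]
    refine mul_le_mul_of_nonneg_right ?_ (w0 y)
    refine (hrc (x := y) ?_).le
    have := Set.abs_sub_left_of_mem_uIcc (Set.uIoc_subset_uIcc hmem)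
    rw [Real.dist_eq] at hx' ⊢
    exact lt_of_le_of_lt this hx'
  rw [hdiff, hx, norm_div, norm_div, Real.norm_of_nonneg hZ.le, ← mul_div_assoc]
  rw [intervalIntegral.integral_const_mul, abs_mul, abs_of_pos hcpos] at hbound
  exact div_le_div_of_nonneg_right hbound hZ.le

/-! ### Distributions carried by an orbit -/

lemma abs_deriv_le_iSup {u : 𝕊 → ℝ} (hu : IsC1 u) (x : ℝ) :
    |deriv (lft u) x| ≤ ⨆ y : 𝕊, |derivS u y| := by
  have hc : Continuous (derivS u) :=
    Continuous.quotient_lift (hu.continuous_deriv le_rfl) _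
  exact le_ciSup (f := fun y : 𝕊 => |derivS u y|) (isCompact_range hc.abs).bddAbove ((x : ℝ) : 𝕊)

lemma differentiable_lft (u : C1Sub) : Differentiable ℝ (lft u) :=
  ContDiff.differentiable (show ContDiff ℝ 1 (lft u) from u.2) one_ne_zero

/-- The functional `u ↦ ∑ p n * u' (x n)`, for a summable nonnegative weight `p` and points
`x n` given by lifts to `ℝ`. -/
def orbitFunctional (p : ℤ → ℝ) (x : ℤ → ℝ) (hp0 : ∀ n, 0 ≤ p n) (hp : Summable p) :
    C1Sub →ₗ[ℝ] ℝ :=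
  have hs : ∀ u : C1Sub, Summable fun n => p n * deriv (lft u) (x n) := fun u =>
    Summable.of_norm_bounded (hp.mul_right (⨆ y : 𝕊, |derivS u y|)) fun n => by
      rw [norm_mul, Real.norm_of_nonneg (hp0 n)]
      exact mul_le_mul_of_nonneg_left (abs_deriv_le_iSup u.2 _) (hp0 n)
  { toFun := fun u => ∑' n, p n * deriv (lft u) (x n)
    map_add' := fun u v => by
      rw [← (hs u).tsum_add (hs v)]
      refine tsum_congr fun n => ?_
      have h1 : lft ((u + v : C1Sub) : 𝕊 → ℝ) = lft u + lft v := rfl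
      rw [h1, deriv_add (differentiable_lft u _)
        (differentiable_lft v _), mul_add]
    map_smul' := fun c u => by
      rw [RingHom.id_apply, smul_eq_mul, ← tsum_mul_left]
      refine tsum_congr fun n => ?_
      have h1 : lft ((c • u : C1Sub) : 𝕊 → ℝ) = c • lft u := rfl
      rw [h1, deriv_const_smul _ (differentiable_lft u _), smul_eq_mul]
      ring }

lemma orbitFunctional_isDistribution (p : ℤ → ℝ) (x : ℤ → ℝ) (hp0 : ∀ n, 0 ≤ p n)
    (hp : Summable p) : IsDistribution (orbitFunctional p x hp0 hp) := by
  refine ⟨∑' n, p n, fun u => ?_⟩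
  have h1 : |∑' n, p n * deriv (lft u) (x n)| ≤ ∑' n, p n * ⨆ y : 𝕊, |derivS u y| := by
    refine tsum_of_norm_bounded (f := fun n => p n * deriv (lft u) (x n))
      (hp.mul_right _).hasSum fun n => ?_
    rw [norm_mul, Real.norm_of_nonneg (hp0 n)]
    exact mul_le_mul_of_nonneg_left (abs_deriv_le_iSup u.2 _) (hp0 n)
  refine h1.trans ?_
  rw [tsum_mul_right]
  refine mul_le_mul_of_nonneg_left ?_ (tsum_nonneg hp0)
  exact le_add_of_nonneg_left (Real.iSup_nonneg fun y => abs_nonneg _)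

/-- By the chain rule, the `n`-th term for `u ∘ f` is the `(n + 1)`-th term for `u`. -/
lemma orbitFunctional_invariant (f : C1Diffeo) (p : ℤ → ℝ) (x : ℤ → ℝ) (hp0 : ∀ n, 0 ≤ p n)
    (hp : Summable p) (hx : ∀ n, f.F (x n) = x (n + 1))
    (hpf : ∀ n, p (n + 1) = p n * deriv f.F (x n)) :
    InvariantUnder f (orbitFunctional p x hp0 hp) := by
  intro u v huv
  have h1 : lft v = lft u ∘ f.F := funext fun y => huv y
  change ∑' n, p n * deriv (lft v) (x n) = ∑' n, p n * deriv (lft u) (x n)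
  rw [← (Equiv.addRight (1 : ℤ)).tsum_eq fun n => p n * deriv (lft u) (x n)]
  refine tsum_congr fun n => ?_
  rw [h1, deriv_comp _ (differentiable_lft u _)
    ((f.contDiff.differentiable one_ne_zero) _), Equiv.coe_addRight, hx, hpf]
  ring

/-- The measure `∑ p n δ_{x n}` has an atom at `0`, hence is not a multiple of Lebesgue measure,
so it does not annihilate all derivatives: take `u' = v - ∫ v` for a narrow bump `v` at `0`. -/
lemma orbitFunctional_ne_zero {ρ : ℝ} (hρ : Irrational ρ) (p : ℤ → ℝ) (x : ℤ → ℝ)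
    (hp0 : ∀ n, 0 ≤ p n) (hp : Summable p) (hp1 : p 0 = 1) (hx : x 0 = 0) :
    ∃ u, orbitFunctional p x hp0 hp u ≠ 0 := by
  set P := ∑' n, p n with hP
  have hP0 : 0 ≤ P := tsum_nonneg hp0
  obtain ⟨v, vc, vper, v0, vle, v1, -, -, vint⟩ :=
    exists_spike hρ zero_le_one zero_lt_one (η := 1 / (P + 1)) (by positivity) 0
  set I := ∫ y in (0 : ℝ)..1, v y with hI
  set U : ℝ → ℝ := fun x => ∫ y in (0 : ℝ)..x, (v y - I) with hU
  have gc : Continuous fun y => v y - I := vc.sub continuous_const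
  have Ud : ∀ x, HasDerivAt U (v x - I) x := fun x => gc.integral_hasStrictDerivAt 0 x |>.hasDerivAt
  have Uper : Function.Periodic U 1 := by
    intro x
    have h1 := intervalIntegral.integral_add_adjacent_intervals
      (gc.intervalIntegrable (μ := volume) 0 x) (gc.intervalIntegrable x (x + 1))
    have h2 : ∫ y in x..x + 1, (v y - I) = 0 := by
      have hper : Function.Periodic (fun y => v y - I) 1 := fun y => by simp [vper]
      rw [hper.intervalIntegral_add_eq x 0, zero_add,
        intervalIntegral.integral_sub (vc.intervalIntegrable _ _) (by simp)]
      simp [hI]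
    simp only [hU]
    linarith
  have hlft : lft Uper.lift = U := rfl
  have hC1 : IsC1 Uper.lift := by
    rw [IsC1, hlft, contDiff_one_iff_deriv]
    refine ⟨fun x => (Ud x).differentiableAt, ?_⟩
    have : deriv U = fun x => v x - I := funext fun x => (Ud x).deriv
    rwa [this]
  refine ⟨⟨Uper.lift, hC1⟩, ne_of_gt ?_⟩
  change 0 < ∑' n, p n * deriv (lft Uper.lift) (x n)
  have h1 : ∀ n, p n * deriv (lft Uper.lift) (x n) = p n * v (x n) - p n * I := fun n => by
    rw [hlft, (Ud _).deriv, mul_sub]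
  have hs : Summable fun n => p n * v (x n) :=
    hp.of_nonneg_of_le (fun n => mul_nonneg (hp0 n) (v0 _)) fun n =>
      mul_le_of_le_one_right (hp0 n) (vle _)
  simp only [h1]
  rw [hs.tsum_sub (hp.mul_right I), tsum_mul_right, ← hP]
  have h2 := hs.le_tsum 0 fun n _ => mul_nonneg (hp0 n) (v0 _)
  rw [hx, hp1, v1] at h2
  have h3 : P * I < 1 := by
    calc P * I ≤ P * (1 / (P + 1)) := by gcongr
      _ < 1 := by rw [mul_one_div, div_lt_one (by positivity)]; linarith
  linarith

/-! ### The minimal diffeomorphism -/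

/-- **Theorem B (minimal case).** For each irrational angle `ρ` there exists a minimal `C¹`
circle diffeomorphism of rotation number `ρ` having an invariant 1-distribution which is not a
scalar multiple of integration against the (unique) invariant probability measure. -/
theorem exists_minimal_C1_with_exotic_invariant_distribution (ρ : ℝ) (hρ : Irrational ρ) :
    ∃ f : C1Diffeo, f.rot = ρ ∧
      (∀ x : 𝕊, Dense (Set.range fun n : ℤ => f.mapZ n x)) ∧
      ∃ L : C1Sub →ₗ[ℝ] ℝ, IsDistribution L ∧ InvariantUnder f L ∧
        ∀ (μ : Measure 𝕊), IsProbabilityMeasure μ → MeasurePreserving f.toCircle μ μ →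
          ¬ ∃ c : ℝ, ∀ u : C1Sub, L u = c * ∫ x, (u : 𝕊 → ℝ) x ∂μ := by
  obtain ⟨w, φ, p, w1, wper, wint01, φc, wφ, wφ', p01, p0, psum, pstep⟩ := exists_weights hρ
  have wint : ∀ a b, IntervalIntegrable w volume a b := fun a b =>
    Function.Periodic.intervalIntegrable₀ (T := 1) wper one_ne_zero wint01 a b
  have w0 : ∀ y, 0 ≤ w y := fun y => zero_le_one.trans (w1 y)
  have wge : ∀ a b, a ≤ b → b - a ≤ ∫ y in a..b, w y := fun a b hab => by
    have := intervalIntegral.integral_mono_on hab (f := fun _ => (1 : ℝ)) (by simp) (wint a b)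
      fun y _ => w1 y
    simpa using this
  set Z := ∫ y in (0 : ℝ)..1, w y with hZ
  have Z0 : 0 < Z := by have := wge 0 1 zero_le_one; linarith
  set H : ℝ → ℝ := fun y => (∫ t in (0 : ℝ)..y, w t) / Z with hHdef
  have hH : ∀ a b, H b - H a = (∫ y in a..b, w y) / Z := fun a b => by
    simp only [hHdef]
    rw [← sub_div, intervalIntegral.integral_interval_sub_left (wint _ _) (wint _ _)]
  have H0 : H 0 = 0 := by simp [hHdef]
  have Hc : Continuous H := (intervalIntegral.continuous_primitive wint 0).div_const Z
  have Hlow : ∀ a b, a ≤ b → (b - a) / Z ≤ H b - H a := fun a b hab => by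
    rw [hH]; exact div_le_div_of_nonneg_right (wge a b hab) Z0.le
  have Hmono : StrictMono H := fun a b hab => by
    have := Hlow a b hab.le
    have h2 : 0 < (b - a) / Z := div_pos (sub_pos.2 hab) Z0
    linarith
  have Hsurj : Function.Surjective H := by
    refine Hc.surjective ?_ ?_
    · refine tendsto_atTop_mono' atTop ?_ (tendsto_id.atTop_div_const Z0)
      filter_upwards [eventually_ge_atTop 0] with y hy
      have := Hlow 0 y hy
      simpa [H0] using this
    · refine tendsto_atBot_mono' atBot ?_ (tendsto_id.atBot_div_const Z0)
      filter_upwards [eventually_le_atBot 0] with y hy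
      have := Hlow y 0 hy
      rw [H0, zero_sub, zero_sub, neg_div] at this
      exact neg_le_neg_iff.1 this
  have Hone : ∀ y, H (y + 1) = H y + 1 := fun y => by
    have h1 := hH y (y + 1)
    rw [Function.Periodic.intervalIntegral_add_eq (T := 1) wper y 0, zero_add, ← hZ,
      div_self Z0.ne'] at h1
    linarith
  set e : ℝ ≃o ℝ := StrictMono.orderIsoOfSurjective H Hmono Hsurj with he
  set h : ℝ → ℝ := fun x => e.symm x with hh
  have hc : Continuous h := e.symm.continuous
  have hr : ∀ x, H (h x) = x := fun x => e.apply_symm_apply x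
  have hl : ∀ y, h (H y) = y := fun y => e.symm_apply_apply y
  have hone : ∀ x, h (x + 1) = h x + 1 := fun x => Hmono.injective (by rw [hr, Hone, hr])
  have dF := hasDerivAt_conj (s := ρ) Z0 wint w0 hH hc hr φc wφ
  have dG := hasDerivAt_conj (s := -ρ) (ψ := fun y => -φ (y - ρ)) Z0 wint w0 hH hc hr
    (φc.comp (continuous_sub_right ρ)).neg (by simpa only [← sub_eq_add_neg] using wφ')
  have dF' : deriv (fun x => H (h x + ρ)) = fun x => Real.exp (φ (h x)) :=
    funext fun x => (dF x).deriv
  let f : C1Diffeo :=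
    { F := fun x => H (h x + ρ)
      Finv := fun x => H (h x + -ρ)
      contDiff := by
        rw [contDiff_one_iff_deriv, dF']
        exact ⟨fun x => (dF x).differentiableAt, Real.continuous_exp.comp (φc.comp hc)⟩
      contDiff_inv := by
        have dG' : deriv (fun x => H (h x + -ρ)) = fun x => Real.exp (-φ (h x - ρ)) :=
          funext fun x => (dG x).deriv
        rw [contDiff_one_iff_deriv, dG']
        exact ⟨fun x => (dG x).differentiableAt, by fun_prop⟩
      deriv_pos := fun x => by rw [dF']; exact Real.exp_pos _
      map_add_one := fun x => by simp only [hone]; rw [add_right_comm, Hone]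
      left_inv := fun x => by simp [hl, hr]
      right_inv := fun x => by simp [hl, hr] }
  let E : CircleDeg1Lift := ⟨⟨H, Hmono.monotone⟩, Hone⟩
  have Hint : ∀ (y : ℝ) (m : ℤ), H (y + m) = H y + m := fun y m => E.map_add_int y m
  have hiter : ∀ (n : ℤ) (x : ℝ), f.iterZ n x = H (h x + n * ρ) := by
    intro n x
    have key : ∀ (s : ℝ) (n : ℕ), (fun x => H (h x + s))^[n] x = H (h x + n * s) := by
      intro s n
      induction n with
      | zero => simp [hr]
      | succ n ih =>
        rw [Function.iterate_succ_apply', ih]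
        simp only [hl]
        push_cast
        congr 1; ring
    cases n with
    | ofNat n => exact (key ρ n).trans (by simp)
    | negSucc n =>
      refine (key (-ρ) (n + 1)).trans ?_
      rw [Int.cast_negSucc]
      congr 1; ring
  refine ⟨f, ?_, fun x => ?_, orbitFunctional p (fun n => H (n * ρ)) p0 psum,
    orbitFunctional_isDistribution _ _ _ _, orbitFunctional_invariant f _ _ _ _ ?_ ?_, ?_⟩
  · have hsemi : Function.Semiconj E
        (CircleDeg1Lift.translate (Multiplicative.ofAdd ρ) : CircleDeg1Lift) f.deg1 := by
      intro y
      change H (ρ + y) = H (h (H y) + ρ)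
      rw [hl, add_comm]
    rw [C1Diffeo.rot, ← CircleDeg1Lift.translationNumber_eq_of_semiconj hsemi,
      CircleDeg1Lift.translationNumber_translate]
  · induction x using QuotientAddGroup.induction_on with
    | H x =>
    have hd : Dense (AddSubgroup.closure {ρ, 1} : Set ℝ) :=
      dense_addSubgroupClosure_pair_iff.2 (by simpa using hρ)
    let g : ℝ → 𝕊 := fun z => ((H (h x + z) : ℝ) : 𝕊)
    have gc : Continuous g :=
      (AddCircle.continuous_mk' 1).comp (Hc.comp (continuous_const.add continuous_id))
    have gs : Function.Surjective g := by
      intro y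
      induction y using QuotientAddGroup.induction_on with
      | H y =>
      refine ⟨h y - h x, ?_⟩
      simp only [g, add_sub_cancel, hr]
    refine (gs.denseRange.dense_image gc hd).mono ?_
    rintro _ ⟨z, hz, rfl⟩
    obtain ⟨n, m, rfl⟩ := AddSubgroup.mem_closure_pair.1 hz
    refine ⟨n, ?_⟩
    change ((f.iterZ n x : ℝ) : 𝕊) = ((H (h x + (n • ρ + m • (1 : ℝ))) : ℝ) : 𝕊)
    rw [hiter, zsmul_eq_mul, zsmul_eq_mul, mul_one, ← add_assoc, Hint]
    simp
  · intro n
    change H (h (H (n * ρ)) + ρ) = H ((n + 1 : ℤ) * ρ)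
    rw [hl]
    push_cast
    congr 1; ring
  · intro n
    change _ = p n * deriv (fun x => H (h x + ρ)) (H (n * ρ))
    simp only [dF', pstep, hl]
  -- Testing on the constant function `1` forces the scalar `c` to vanish.
  · rintro μ hμ - ⟨c, hcL⟩
    have hone1 : IsC1 (fun _ => (1 : ℝ)) := contDiff_const
    have hL1 : orbitFunctional p (fun n => H (n * ρ)) p0 psum ⟨fun _ => 1, hone1⟩ = 0 := by
      change ∑' n : ℤ, p n * deriv (fun _ : ℝ => (1 : ℝ)) (H (n * ρ)) = 0
      simp
    have hc0 : c = 0 := by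
      have := hcL ⟨fun _ => 1, hone1⟩
      rw [hL1] at this
      simpa using this.symm
    obtain ⟨u, hu⟩ := orbitFunctional_ne_zero hρ p (fun n => H (n * ρ)) p0 psum p01 (by simp [H0])
    exact hu (by rw [hcL u, hc0, zero_mul])
end
end

section
/- For every irrational number ρ (mod 1), there exists an orientation-preserving C^1 circle diffeomorphism f with rotation number ρ such that f admits a minimal invariant Cantor set (i.e., f is a Denjoy counter-example) and f admits an f-invariant 1-distribution that is not a scalar multiple of integration against the unique f-invariant probability measure. -/
/-!
The diffeomorphism is obtained by blowing up one orbit of the rotation by `ρ`. Lengths `len n > 0`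
of total mass `1 / 2`, whose consecutive ratios are close to `1` and tend to `1`, give a strictly
increasing map `J x = x / 2 + ∑ len n * count n x` (`DenjoyData.J`) that commutes with integer
translations and has a jump of size `len n` at `n ρ + k`. The gap opened at `n ρ` is `(a n, b n)`.

The lift is `F y = J ρ + ∫₀ʸ g`, where `g = 1 + ∑ (len (n + 1) / len n - 1) * bump n` and `bump n`
is a periodic tent of integral `len n` supported on the `n`-th gap. The supports are disjoint and
the coefficients tend to `0`, so the series converges uniformly and `g` is continuous; the
coefficients are less than `1 / 2` in absolute value and the tents at most `2`, so `g > 0`.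
Integrating term by term gives `F ∘ J = J ∘ (· + ρ)` (`DenjoyData.F_J`), which yields the rotation
number, and `F` maps each gap onto the next (`DenjoyData.F_a`, `DenjoyData.F_b`).

The minimal Cantor set `K` is the closure of the range of `J` modulo `1`. It is perfect since `J` is
right-continuous, totally disconnected since the gaps are dense, and minimal since every orbit
accumulates on all of it (`DenjoyData.K_subset_orbit_closure`): orbits of `F` are trapped between
values of `J` along orbits of the translation, which are dense modulo `1`.

The exotic distribution is `L u = ∑ₙ (u (fⁿ b) - u (fⁿ m))`, where `m` and `b` are the midpoint and
the right endpoint of one gap. The points `fⁿ m`, `fⁿ b` lie in the closure of a gap of length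
`len n`, so the series is bounded by the `C¹` norm of `u`, and `L` is invariant by shifting the
index. It kills constants but not a smooth function supported in that gap and positive at `m`, so
it is not a multiple of integration against any probability measure.
-/

open MeasureTheory Function Filter Set
open scoped Topology

noncomputable section

/-! ### The blow-up of an orbit of the rotation -/

/-- An irrational angle `ρ` with the lengths `len n` of the gaps to be inserted along the orbit
`n ρ`. The ratio `len (n + 1) / len n` is the mean derivative of the diffeomorphism on the `n`-th
gap; it has to tend to `1` for the derivative to be continuous. -/
structure DenjoyData where
  ρ : ℝ
  irr : Irrational ρ
  len : ℤ → ℝ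
  len_pos : ∀ n, 0 < len n
  hasSum_len : HasSum len (1 / 2)
  ratio_near : ∀ n, |len (n + 1) / len n - 1| < 1 / 2
  ratio_lim : Tendsto (fun n => len (n + 1) / len n) cofinite (𝓝 1)

/-- Orbits `n ρ + k` of an irrational translation are dense modulo `1`. -/
lemma exists_orbit_between {ρ : ℝ} (h : Irrational ρ) {a b : ℝ} (hab : a < b) :
    ∃ n k : ℤ, a < n * ρ + k ∧ n * ρ + k < b := by
  have hd : Dense (AddSubgroup.closure {ρ, (1 : ℝ)} : Set ℝ) :=
    dense_addSubgroupClosure_pair_iff.2 (by simpa using h)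
  obtain ⟨z, hz, hz2⟩ := hd.exists_between hab
  obtain ⟨n, k, rfl⟩ := AddSubgroup.mem_closure_pair.1 hz
  refine ⟨n, k, ?_⟩
  simpa using hz2

lemma circle_coe_add_int (x : ℝ) (k : ℤ) : ((x + k : ℝ) : 𝕊) = (x : 𝕊) := by
  rw [AddCircle.coe_add]
  have : ((k : ℝ) : 𝕊) = 0 := (AddCircle.coe_eq_zero_iff 1).2 ⟨k, by simp⟩
  rw [this, add_zero]

lemma circle_coe_eq {x y : ℝ} (h : (x : 𝕊) = (y : 𝕊)) : ∃ k : ℤ, x = y + k := by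
  have : ((x - y : ℝ) : 𝕊) = 0 := by rw [AddCircle.coe_sub, h, sub_self]
  obtain ⟨k, hk⟩ := (AddCircle.coe_eq_zero_iff 1).1 this
  exact ⟨k, by simp at hk; linarith⟩

namespace DenjoyData

variable (d : DenjoyData)

/-- The number of points of `n ρ + ℤ` in `(0, x]` (counted negatively for `x < 0`). -/
def count (n : ℤ) (x : ℝ) : ℤ := ⌊x - n * d.ρ⌋ - ⌊-(n * d.ρ)⌋

lemma abs_count_le (n : ℤ) (x : ℝ) : |(d.count n x : ℝ)| ≤ |x| + 1 := by
  unfold count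
  push_cast
  have h1 := Int.floor_le (x - n * d.ρ)
  have h2 := Int.lt_floor_add_one (x - n * d.ρ)
  have h3 := Int.floor_le (-(n * d.ρ))
  have h4 := Int.lt_floor_add_one (-(n * d.ρ))
  rw [abs_le]
  constructor <;> cases abs_cases x <;> linarith

lemma count_mono (n : ℤ) {x y : ℝ} (h : x ≤ y) : (d.count n x : ℝ) ≤ d.count n y := by
  unfold count
  have : ⌊x - n * d.ρ⌋ ≤ ⌊y - n * d.ρ⌋ := Int.floor_le_floor (by linarith)
  exact_mod_cast (by omega)

lemma summable_count (x : ℝ) : Summable fun n => d.len n * d.count n x := by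
  refine Summable.of_norm_bounded (g := fun n => d.len n * (|x| + 1))
    (d.hasSum_len.summable.mul_right _) fun n => ?_
  rw [Real.norm_eq_abs, abs_mul, abs_of_pos (d.len_pos n)]
  exact mul_le_mul_of_nonneg_left (d.abs_count_le n x) (d.len_pos n).le

/-- The blow-up map: it opens up a gap of length `len n` to the left of the image of each
`n ρ + k`. It is right-continuous. The term `x / 2` takes up the mass left by the gaps, and makes
the left inverse of `J` Lipschitz. -/
def J (x : ℝ) : ℝ := x / 2 + ∑' n, d.len n * d.count n x

lemma J_zero : d.J 0 = 0 := by simp [J, count]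

lemma J_add_int (x : ℝ) (k : ℤ) : d.J (x + k) = d.J x + k := by
  have h : ∀ n, d.len n * (d.count n (x + k) : ℝ) = d.len n * d.count n x + d.len n * k := by
    intro n
    have : d.count n (x + k) = d.count n x + k := by
      unfold count
      rw [show x + k - n * d.ρ = x - n * d.ρ + k by ring, Int.floor_add_intCast]; ring
    rw [this]; push_cast; ring
  have hs := (d.hasSum_len.mul_right (k : ℝ))
  unfold J
  rw [tsum_congr h, (d.summable_count x).tsum_add hs.summable, hs.tsum_eq]
  ring

lemma J_expand {x y : ℝ} (h : x ≤ y) : (y - x) / 2 ≤ d.J y - d.J x := by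
  have := (d.summable_count x).tsum_le_tsum
    (fun n => mul_le_mul_of_nonneg_left (d.count_mono n h) (d.len_pos n).le)
    (d.summable_count y)
  unfold J
  linarith

lemma J_strictMono : StrictMono d.J := fun x y h => by
  have := d.J_expand h.le
  linarith

/-- The map `J` jumps by at least `len n` at `n ρ + k`. -/
lemma J_jump {n k : ℤ} {x : ℝ} (h : x < n * d.ρ + k) :
    d.J x ≤ d.J (n * d.ρ) - d.len n + k := by
  have hle := d.count_mono n h.le
  have key : d.len n ≤ ∑' m, (d.len m * d.count m (n * d.ρ + k) - d.len m * d.count m x) := by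
    have hs := (d.summable_count (n * d.ρ + k)).sub (d.summable_count x)
    refine le_trans ?_ (hs.le_tsum n fun m _ => ?_)
    · have h1 : d.count n x + 1 ≤ d.count n (n * d.ρ + k) := by
        unfold count
        have h2 : ⌊x - n * d.ρ⌋ < k := by
          rw [Int.floor_lt]; linarith
        have h3 : ⌊(n * d.ρ + k) - n * d.ρ⌋ = k := by simp
        omega
      have h1' : (d.count n x : ℝ) + 1 ≤ d.count n (n * d.ρ + k) := by exact_mod_cast h1
      nlinarith [d.len_pos n]
    · have := mul_le_mul_of_nonneg_left (d.count_mono m h.le) (d.len_pos m).le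
      linarith
  rw [(d.summable_count _).tsum_sub (d.summable_count x)] at key
  have h2 := d.J_add_int (n * d.ρ) k
  unfold J at *
  linarith

lemma J_right_cont (t : ℝ) : Tendsto d.J (𝓝[>] t) (𝓝 (d.J t)) := by
  unfold J
  refine Tendsto.add ?_ ?_
  · exact ((continuous_id.div_const 2).tendsto t).mono_left nhdsWithin_le_nhds
  refine tendsto_tsum_of_dominated_convergence (bound := fun n => d.len n * (|t| + 2))
    (d.hasSum_len.summable.mul_right _) (fun n => ?_) ?_
  · refine Tendsto.const_mul _ ?_
    have h1 : Tendsto (fun x => x - n * d.ρ) (𝓝[>] t) (𝓝[≥] (t - n * d.ρ)) := by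
      refine tendsto_nhdsWithin_iff.2 ⟨?_, ?_⟩
      · exact ((continuous_id.sub continuous_const).tendsto t).mono_left nhdsWithin_le_nhds
      · filter_upwards [self_mem_nhdsWithin] with x hx
        simp only [mem_Ioi, mem_Ici] at *; linarith
    have h2 := (tendsto_floor_right_pure_floor (t - n * d.ρ)).comp h1
    refine tendsto_const_nhds.congr' ?_
    filter_upwards [tendsto_pure.1 h2] with x hx
    simp only [comp] at hx
    simp [count, hx]
  · filter_upwards [Ioo_mem_nhdsGT (show t < t + 1 by linarith)] with x hx n
    rw [Real.norm_eq_abs, abs_mul, abs_of_pos (d.len_pos n)]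
    refine mul_le_mul_of_nonneg_left ((d.abs_count_le n x).trans ?_) (d.len_pos n).le
    have : |x| ≤ |t| + |x - t| := by
      calc |x| = |t + (x - t)| := by ring_nf
        _ ≤ _ := abs_add_le _ _
    rw [abs_of_pos (a := x - t) (by linarith [hx.1])] at this
    linarith [hx.2]

lemma exists_J_lt (t : ℝ) {e : ℝ} (he : d.J t < e) : ∃ s, t < s ∧ d.J s < e := by
  have := (d.J_right_cont t).eventually (gt_mem_nhds he)
  obtain ⟨s, h1, h2⟩ := (this.and self_mem_nhdsWithin).exists
  exact ⟨s, h2, h1⟩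

/-! ### The gaps -/

/-- The right endpoint of the `n`-th gap. -/
def b (n : ℤ) : ℝ := d.J (n * d.ρ)

/-- The left endpoint of the `n`-th gap. -/
def a (n : ℤ) : ℝ := d.b n - d.len n

lemma a_lt_b (n : ℤ) : d.a n < d.b n := by
  have := d.len_pos n
  unfold a; linarith

lemma len_le (n : ℤ) : d.len n ≤ 1 / 2 :=
  le_hasSum d.hasSum_len n fun m _ => (d.len_pos m).le

/-- The map `J` takes no value in an open gap, nor in its integer translates. -/
lemma J_not_mem_gap (x : ℝ) (n k : ℤ) (h1 : d.a n + k < d.J x) (h2 : d.J x < d.b n + k) :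
    False := by
  rcases lt_or_ge x (n * d.ρ + k) with h | h
  · have := d.J_jump h
    unfold a b at *; linarith
  · have := d.J_strictMono.monotone h
    rw [d.J_add_int] at this
    unfold b at *; linarith

/-- The open gap of index `n` and the closed gap of index `m`, modulo `1`, do not meet if
`n ≠ m`. -/
lemma gap_disjoint {n m k j : ℤ} {y z : ℝ} (hy : y ∈ Ioo (d.a n + k) (d.b n + k))
    (hz : z ∈ Icc (d.a m + j) (d.b m + j)) (hyz : y = z) : n = m := by
  subst hyz
  rcases lt_trichotomy (n * d.ρ + k) (m * d.ρ + j) with h | h | h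
  · have := d.J_jump h
    rw [d.J_add_int] at this
    have h1 := hy.2
    have h2 := hz.1
    unfold a b at *; linarith
  -- Equality of the two base points would make `ρ` rational.
  · by_contra hne
    refine d.irr.ne_rat ((j - k : ℤ) / (n - m : ℤ) : ℚ) ?_
    have : ((n : ℝ) - m) ≠ 0 := by
      rw [sub_ne_zero]; exact_mod_cast hne
    push_cast
    rw [eq_div_iff this]; linarith
  · have := d.J_jump h
    rw [d.J_add_int] at this
    have h1 := hy.1
    have h2 := hz.2
    unfold a b at *; linarith

/-! ### Periodic tents supported on the gaps -/

/-- A `1`-periodic tent of height `2` whose support is the `n`-th gap modulo `1`. -/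
def bump (n : ℤ) (y : ℝ) : ℝ :=
  max 0 (2 - 4 * ‖((y - (d.b n - d.len n / 2) : ℝ) : 𝕊)‖ / d.len n)

lemma bump_nonneg (n : ℤ) (y : ℝ) : 0 ≤ d.bump n y := le_max_left _ _

lemma bump_le (n : ℤ) (y : ℝ) : d.bump n y ≤ 2 := by
  refine max_le (by norm_num) ?_
  have : 0 ≤ 4 * ‖((y - (d.b n - d.len n / 2) : ℝ) : 𝕊)‖ / d.len n :=
    div_nonneg (by positivity) (d.len_pos n).le
  linarith

lemma bump_cont (n : ℤ) : Continuous (d.bump n) := by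
  have h : Continuous fun y : ℝ => ((y - (d.b n - d.len n / 2) : ℝ) : 𝕊) :=
    (AddCircle.continuous_mk' 1).comp (continuous_id.sub continuous_const)
  exact continuous_const.max (continuous_const.sub ((continuous_const.mul h.norm).div_const _))

lemma bump_periodic (n : ℤ) : Periodic (d.bump n) 1 := fun y => by
  unfold bump
  rw [show y + 1 - (d.b n - d.len n / 2) = y - (d.b n - d.len n / 2) + (1 : ℤ) by push_cast; ring,
    circle_coe_add_int]

lemma bump_supp {n : ℤ} {y : ℝ} (h : d.bump n y ≠ 0) :
    ∃ k : ℤ, y ∈ Ioo (d.a n + k) (d.b n + k) := by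
  have hl := d.len_pos n
  have h1 : 0 < 2 - 4 * ‖((y - (d.b n - d.len n / 2) : ℝ) : 𝕊)‖ / d.len n := by
    by_contra hc
    exact h (max_eq_left (not_lt.1 hc))
  rw [UnitAddCircle.norm_eq, sub_pos, div_lt_iff₀ hl] at h1
  refine ⟨round (y - (d.b n - d.len n / 2)), ?_⟩
  have h2 := abs_lt.1 (show |y - (d.b n - d.len n / 2) - round (y - (d.b n - d.len n / 2))|
    < d.len n / 2 by linarith)
  unfold a
  constructor <;> linarith [h2.1, h2.2]

lemma bump_zero {n : ℤ} {y : ℝ} (h1 : d.b n ≤ y) (h2 : y ≤ d.a n + 1) : d.bump n y = 0 := by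
  by_contra h
  obtain ⟨k, hk1, hk2⟩ := d.bump_supp h
  have h3 : (0 : ℝ) < k := by linarith
  have h4 : (k : ℝ) < 1 := by linarith
  have h5 : (0 : ℤ) < k := by exact_mod_cast h3
  have h6 : k < (1 : ℤ) := by exact_mod_cast h4
  omega

lemma bump_int (n : ℤ) (s t : ℝ) : IntervalIntegrable (d.bump n) volume s t :=
  (d.bump_cont n).intervalIntegrable s t

lemma bump_eq {n : ℤ} {y : ℝ} (h1 : d.a n ≤ y) (h2 : y ≤ d.b n) :
    d.bump n y = 2 - 4 * |y - (d.b n - d.len n / 2)| / d.len n := by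
  have hl := d.len_pos n
  have hl2 := d.len_le n
  unfold a at h1
  have h3 : |y - (d.b n - d.len n / 2)| ≤ d.len n / 2 := abs_le.2 ⟨by linarith, by linarith⟩
  have h4 : round (y - (d.b n - d.len n / 2)) = 0 := by
    rw [round_eq_zero_iff]
    constructor <;> linarith [(abs_le.1 h3).1, (abs_le.1 h3).2]
  unfold bump
  rw [UnitAddCircle.norm_eq, h4, max_eq_right]
  · simp
  · rw [sub_nonneg, div_le_iff₀ hl]; simp; linarith

lemma bump_integral_gap (n : ℤ) : ∫ y in (d.a n)..(d.b n), d.bump n y = d.len n := by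
  have hl := d.len_pos n
  set m := d.b n - d.len n / 2 with hm
  have ham : d.a n ≤ m := by unfold a; linarith
  have hmb : m ≤ d.b n := by linarith
  -- The tent is affine on each side of the midpoint `m`.
  have hF : ∀ c e s t : ℝ, ∫ y in s..t, (c + e * (y - m)) =
      (c * t + e * (t - m) ^ 2 / 2) - (c * s + e * (s - m) ^ 2 / 2) := by
    intro c e s t
    have hd : ∀ y, HasDerivAt (fun y => c * y + e * (y - m) ^ 2 / 2) (c + e * (y - m)) y := by
      intro y
      have := ((hasDerivAt_id y).const_mul c).add
        (((((hasDerivAt_id y).sub_const m).pow 2).const_mul e).div_const 2)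
      exact this.congr_deriv (by simp; ring)
    exact intervalIntegral.integral_eq_sub_of_hasDerivAt (fun y _ => hd y)
      ((by fun_prop : Continuous fun y => c + e * (y - m)).intervalIntegrable s t)
  rw [← intervalIntegral.integral_add_adjacent_intervals (d.bump_int n _ m) (d.bump_int n m _)]
  have h1 : ∫ y in (d.a n)..m, d.bump n y = ∫ y in (d.a n)..m, (2 + 4 / d.len n * (y - m)) := by
    refine intervalIntegral.integral_congr fun y hy => ?_
    rw [uIcc_of_le ham] at hy
    rw [d.bump_eq hy.1 (hy.2.trans hmb), abs_of_nonpos (by linarith [hy.2])]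
    ring
  have h2 : ∫ y in m..(d.b n), d.bump n y = ∫ y in m..(d.b n), (2 + -(4 / d.len n) * (y - m)) := by
    refine intervalIntegral.integral_congr fun y hy => ?_
    rw [uIcc_of_le hmb] at hy
    rw [d.bump_eq (ham.trans hy.1) hy.2, abs_of_nonneg (by linarith [hy.1])]
    ring
  rw [h1, h2, hF, hF]
  have e1 : d.a n = m - d.len n / 2 := by unfold a; linarith
  have e2 : d.b n = m + d.len n / 2 := by linarith
  rw [e1, e2]
  field_simp
  ring

lemma bump_integral_period (n : ℤ) (t : ℝ) : ∫ y in t..t + 1, d.bump n y = d.len n := by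
  rw [(d.bump_periodic n).intervalIntegral_add_eq t (d.a n),
    ← intervalIntegral.integral_add_adjacent_intervals (d.bump_int n _ (d.b n)) (d.bump_int n _ _),
    d.bump_integral_gap]
  have h : ∫ y in (d.b n)..(d.a n + 1), d.bump n y = ∫ y in (d.b n)..(d.a n + 1), (0 : ℝ) := by
    refine intervalIntegral.integral_congr fun y hy => ?_
    have hl := d.len_le n
    rw [uIcc_of_le (by unfold a; linarith)] at hy
    exact d.bump_zero hy.1 hy.2
  rw [h]; simp

/-- The tent of index `n` has integral `len n` over each translate of its gap, and the gaps between
`0` and `J x` are those opened at points of `n ρ + ℤ` between `0` and `x`. -/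
lemma bump_integral_J (n : ℤ) (x : ℝ) :
    ∫ y in (0 : ℝ)..(d.J x), d.bump n y = d.len n * d.count n x := by
  have key : ∀ x, ∫ y in (d.b n)..(d.J x), d.bump n y = d.len n * ⌊x - n * d.ρ⌋ := by
    intro x
    -- With this `k`, the point `J x` lies between the gaps `(a n + k, b n + k)` and
    -- `(a n + k + 1, b n + k + 1)`, where the tent vanishes.
    set k := ⌊x - n * d.ρ⌋ with hk
    have h1 := Int.floor_le (x - n * d.ρ)
    have h2 := Int.lt_floor_add_one (x - n * d.ρ)
    rw [← hk] at h1 h2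
    have h3 : d.b n + k ≤ d.J x := by
      have := d.J_strictMono.monotone (show n * d.ρ + k ≤ x by linarith)
      rwa [d.J_add_int] at this
    have h4 : d.J x ≤ d.a n + 1 + k := by
      have := d.J_jump (n := n) (k := k + 1) (x := x) (by push_cast; linarith)
      push_cast at this
      unfold a b; linarith
    rw [← intervalIntegral.integral_add_adjacent_intervals (d.bump_int n _ (d.b n + k))
      (d.bump_int n _ _)]
    have h5 := (d.bump_periodic n).intervalIntegral_add_zsmul_eq k (d.b n) (d.bump_int n)
    rw [d.bump_integral_period] at h5
    have h6 : ∫ y in (d.b n + k)..(d.J x), d.bump n y =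
        ∫ y in (d.b n + k)..(d.J x), (0 : ℝ) := by
      refine intervalIntegral.integral_congr fun y hy => ?_
      rw [uIcc_of_le h3] at hy
      have := (d.bump_periodic n).sub_zsmul_eq k (x := y)
      rw [← this]
      apply d.bump_zero <;> simp <;> linarith [hy.1, hy.2]
    rw [h6]
    simp at h5
    simp [h5]; ring
  have h0 := key 0
  rw [d.J_zero] at h0
  rw [← intervalIntegral.integral_add_adjacent_intervals (d.bump_int n _ (d.b n)) (d.bump_int n _ _),
    key, intervalIntegral.integral_symm, h0]
  unfold count
  push_cast
  rw [zero_sub]; ring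

/-! ### The derivative of the diffeomorphism -/

/-- The derivative of the diffeomorphism. -/
def g (y : ℝ) : ℝ := 1 + ∑' n, (d.len (n + 1) / d.len n - 1) * d.bump n y

lemma bump_unique {n m : ℤ} {y : ℝ} (h1 : d.bump n y ≠ 0) (h2 : d.bump m y ≠ 0) : n = m := by
  obtain ⟨k, hk⟩ := d.bump_supp h1
  obtain ⟨j, hj⟩ := d.bump_supp h2
  exact d.gap_disjoint hk (Ioo_subset_Icc_self hj) rfl

/-- At each point at most one term of the series defining `g` is nonzero. -/
lemma series_cases (y : ℝ) : (∀ n, d.bump n y = 0) ∨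
    ∃ n, ∀ m, m ≠ n → d.bump m y = 0 := by
  by_cases h : ∀ n, d.bump n y = 0
  · exact Or.inl h
  · push Not at h
    obtain ⟨n, hn⟩ := h
    refine Or.inr ⟨n, fun m hm => ?_⟩
    by_contra hc
    exact hm (d.bump_unique hc hn)

lemma series_hasSum (y : ℝ) :
    HasSum (fun n => (d.len (n + 1) / d.len n - 1) * d.bump n y) (d.g y - 1) := by
  have : Summable (fun n => (d.len (n + 1) / d.len n - 1) * d.bump n y) := by
    rcases d.series_cases y with h | ⟨n, h⟩
    · simp [h, summable_zero]
    · exact summable_of_ne_finset_zero (s := {n}) fun m hm => by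
        simp [h m (by simpa using hm)]
  simpa [g] using this.hasSum

lemma g_pos (y : ℝ) : 0 < d.g y := by
  unfold g
  rcases d.series_cases y with h | ⟨n, h⟩
  · simp [h]
  · rw [tsum_eq_single n fun m hm => by simp [h m hm]]
    have h1 := abs_lt.1 (d.ratio_near n)
    nlinarith [d.bump_nonneg n y, d.bump_le n y, h1.1]

/-- The series defining `g` converges uniformly, since its terms have disjoint supports and its
coefficients tend to `0`. -/
lemma g_cont : Continuous d.g := by
  refine continuous_of_uniform_approx_of_continuous fun u hu => ?_
  obtain ⟨ε, hε, hu⟩ := Metric.mem_uniformity_dist.1 hu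
  have hfin : {n | ¬ |d.len (n + 1) / d.len n - 1| < ε / 2}.Finite := by
    have := d.ratio_lim.eventually (Metric.ball_mem_nhds 1 (half_pos hε))
    simpa [Real.dist_eq] using eventually_cofinite.1 this
  refine ⟨fun y => 1 + ∑ n ∈ hfin.toFinset, (d.len (n + 1) / d.len n - 1) * d.bump n y, ?_, ?_⟩
  · exact continuous_const.add (continuous_finsetSum _ fun n _ =>
      continuous_const.mul (d.bump_cont n))
  intro y
  apply hu
  rw [Real.dist_eq]
  unfold g
  beta_reduce
  rcases d.series_cases y with h | ⟨n, h⟩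
  · simp [h, hε]
  · rw [tsum_eq_single n fun m hm => by simp [h m hm]]
    by_cases hn : n ∈ hfin.toFinset
    · rw [Finset.sum_eq_single n (fun m _ hm => by simp [h m hm]) (fun h => absurd hn h)]
      simp [hε]
    · rw [Finset.sum_eq_zero fun m hm => by
        rw [h m (fun e => hn (e ▸ hm)), mul_zero]]
      simp only [Finite.mem_toFinset, mem_ofPred_eq, not_not] at hn
      rw [add_sub_add_left_eq_sub, sub_zero, abs_mul, abs_of_nonneg (d.bump_nonneg n y)]
      nlinarith [d.bump_nonneg n y, d.bump_le n y, abs_nonneg (d.len (n + 1) / d.len n - 1)]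

lemma g_int (s t : ℝ) : IntervalIntegrable d.g volume s t := d.g_cont.intervalIntegrable s t

lemma g_periodic : Periodic d.g 1 := fun y => by
  unfold g
  congr 1
  exact tsum_congr fun n => by rw [d.bump_periodic n y]

lemma g_sub_one_integral (s t : ℝ) :
    HasSum (fun n => (d.len (n + 1) / d.len n - 1) * ∫ y in s..t, d.bump n y)
      (∫ y in s..t, (d.g y - 1)) := by
  have h := intervalIntegral.hasSum_integral_of_dominated_convergence (μ := volume)
    (a := s) (b := t) (f := fun y => d.g y - 1)
    (F := fun n y => (d.len (n + 1) / d.len n - 1) * d.bump n y)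
    (fun n y => d.bump n y) ?_ ?_ ?_ ?_ ?_
  · simpa using h
  · exact fun n => (continuous_const.mul (d.bump_cont n)).aestronglyMeasurable
  · refine fun n => Eventually.of_forall fun y _ => ?_
    rw [norm_mul, Real.norm_eq_abs, Real.norm_eq_abs, abs_of_nonneg (d.bump_nonneg n y)]
    have := d.ratio_near n
    nlinarith [d.bump_nonneg n y]
  · refine Eventually.of_forall fun y _ => ?_
    rcases d.series_cases y with h | ⟨n, h⟩
    · simp [h, summable_zero]
    · exact summable_of_ne_finset_zero (s := {n}) fun m hm => h m (by simpa using hm)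
  · have hm : Measurable fun y => ∑' n, d.bump n y := by
      refine Measurable.tsum fun n => (d.bump_cont n).measurable
    have hb : ∀ y, ‖∑' n, d.bump n y‖ ≤ 2 := by
      intro y
      rcases d.series_cases y with h | ⟨n, h⟩
      · simp [h]
      · rw [tsum_eq_single n h, Real.norm_eq_abs, abs_of_nonneg (d.bump_nonneg n y)]
        exact d.bump_le n y
    exact (intervalIntegrable_const (c := (2 : ℝ))).mono_fun hm.aestronglyMeasurable
      (Eventually.of_forall fun y => by simpa using hb y)
  · exact Eventually.of_forall fun y _ => d.series_hasSum y

/-! ### The diffeomorphism and its rotation number -/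

/-- The lift of the diffeomorphism: the primitive of `g` that sends `J 0 = 0` to `J ρ`. -/
def F (y : ℝ) : ℝ := d.J d.ρ + ∫ s in (0 : ℝ)..y, d.g s

lemma F_hasDerivAt (y : ℝ) : HasDerivAt d.F (d.g y) y :=
  (intervalIntegral.integral_hasDerivAt_right (d.g_int _ _)
    (d.g_cont.stronglyMeasurableAtFilter _ _) d.g_cont.continuousAt).const_add _

lemma F_deriv : deriv d.F = d.g := funext fun y => (d.F_hasDerivAt y).deriv

lemma F_contDiff : ContDiff ℝ 1 d.F := by
  rw [contDiff_one_iff_deriv]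
  exact ⟨fun y => (d.F_hasDerivAt y).differentiableAt, by rw [d.F_deriv]; exact d.g_cont⟩

lemma F_strictMono : StrictMono d.F :=
  strictMono_of_deriv_pos fun y => by rw [d.F_deriv]; exact d.g_pos y

lemma F_sub (s t : ℝ) : d.F t - d.F s = (t - s) + ∫ y in s..t, (d.g y - 1) := by
  have h := intervalIntegral.integral_interval_sub_left (d.g_int 0 t) (d.g_int 0 s)
  unfold F
  rw [intervalIntegral.integral_sub (d.g_int s t) intervalIntegrable_const]
  simp
  linarith

/-- The blow-up map semiconjugates the translation by `ρ` to `F`. -/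
lemma F_J (x : ℝ) : d.F (d.J x) = d.J (x + d.ρ) := by
  have h1 := d.F_sub 0 (d.J x)
  have h2 := d.g_sub_one_integral 0 (d.J x)
  simp only [d.bump_integral_J] at h2
  have h3 := (d.summable_count x).hasSum.add h2
  have h4 : ∀ n, d.len n * d.count n x + (d.len (n + 1) / d.len n - 1) * (d.len n * d.count n x)
      = d.len (n + 1) * d.count (n + 1) (x + d.ρ) - d.len (n + 1) * d.count (n + 1) d.ρ := by
    intro n
    have hl := (d.len_pos n).ne'
    have h5 : (d.count n x : ℝ) = d.count (n + 1) (x + d.ρ) - d.count (n + 1) d.ρ := by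
      unfold count
      push_cast
      rw [show x + d.ρ - (n + 1) * d.ρ = x - n * d.ρ by ring,
        show d.ρ - (n + 1) * d.ρ = -(n * d.ρ) by ring]
      ring
    rw [h5]
    field_simp
    ring
  simp only [h4] at h3
  have h5 := ((d.summable_count (x + d.ρ)).hasSum.sub (d.summable_count d.ρ).hasSum)
  rw [← (Equiv.addRight (1 : ℤ)).hasSum_iff] at h5
  have h6 := h3.unique h5
  have h7 : d.F 0 = d.J d.ρ := by simp [F]
  rw [h7] at h1
  unfold J at *
  linarith

lemma F_b (n : ℤ) : d.F (d.b n) = d.b (n + 1) := by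
  unfold b
  rw [d.F_J]; push_cast; ring_nf

lemma F_a (n : ℤ) : d.F (d.a n) = d.a (n + 1) := by
  have h1 := d.F_sub (d.a n) (d.b n)
  have h2 := d.g_sub_one_integral (d.a n) (d.b n)
  have h3 : ∀ m, m ≠ n → (d.len (m + 1) / d.len m - 1) * ∫ y in (d.a n)..(d.b n), d.bump m y = 0 := by
    intro m hm
    have : ∫ y in (d.a n)..(d.b n), d.bump m y = ∫ y in (d.a n)..(d.b n), (0 : ℝ) := by
      refine intervalIntegral.integral_congr fun y hy => ?_
      rw [uIcc_of_le (d.a_lt_b n).le] at hy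
      by_contra hc
      obtain ⟨k, hk⟩ := d.bump_supp hc
      exact hm (d.gap_disjoint (j := 0) hk (by simpa using hy) rfl)
    rw [this]; simp
  have h4 := h2.unique (hasSum_single n h3)
  rw [d.bump_integral_gap] at h4
  have hl := (d.len_pos n).ne'
  rw [h4, d.F_b] at h1
  field_simp at h1
  unfold a at *
  linarith

lemma F_add_one (y : ℝ) : d.F (y + 1) = d.F y + 1 := by
  have h0 := d.F_J 1
  have h1 := d.J_add_int 0 1
  have h2 := d.J_add_int d.ρ 1
  push_cast at h1 h2
  rw [zero_add, d.J_zero, zero_add] at h1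
  rw [h1, add_comm, h2] at h0
  have h3 := intervalIntegral.integral_interval_sub_left (d.g_int 0 (y + 1)) (d.g_int 0 y)
  rw [d.g_periodic.intervalIntegral_add_eq y 0, zero_add] at h3
  unfold F at *
  linarith

lemma F_add_int (y : ℝ) (k : ℤ) : d.F (y + k) = d.F y + k := by
  have h : Periodic (fun y => d.F y - y) 1 := fun y => by
    simp only [d.F_add_one]; ring
  have := h.int_mul k y
  simp at this
  linarith

lemma F_surjective : Surjective d.F := by
  have hc : Continuous d.F := d.F_contDiff.continuous
  intro z
  have h1 : d.F (0 + ⌊z - d.F 0⌋) ≤ z := by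
    rw [d.F_add_int]; linarith [Int.floor_le (z - d.F 0)]
  have h2 : z ≤ d.F (0 + (⌊z - d.F 0⌋ + 1 : ℤ)) := by
    rw [d.F_add_int]; push_cast; linarith [Int.lt_floor_add_one (z - d.F 0)]
  exact mem_range_of_exists_le_of_exists_ge hc ⟨_, h1⟩ ⟨_, h2⟩

/-- The lift `F` as a homeomorphism of the line. -/
def homeo : ℝ ≃ₜ ℝ :=
  (StrictMono.orderIsoOfSurjective d.F d.F_strictMono d.F_surjective).toHomeomorph

/-- The Denjoy diffeomorphism. -/
def diffeo : C1Diffeo where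
  F := d.F
  Finv := d.homeo.symm
  contDiff := d.F_contDiff
  contDiff_inv := d.homeo.contDiff_symm_deriv (f' := d.g) (fun y => (d.g_pos y).ne')
    (fun y => d.F_hasDerivAt y) d.F_contDiff
  deriv_pos := fun y => by rw [d.F_deriv]; exact d.g_pos y
  map_add_one := d.F_add_one
  left_inv := d.homeo.symm_apply_apply
  right_inv := d.homeo.apply_symm_apply

lemma diffeo_rot : d.diffeo.rot = d.ρ := by
  let j : CircleDeg1Lift := ⟨⟨d.J, d.J_strictMono.monotone⟩, fun x => by
    simpa using d.J_add_int x 1⟩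
  have h : Semiconj j (CircleDeg1Lift.translate (Multiplicative.ofAdd d.ρ)) d.diffeo.deg1 := by
    intro x
    change d.J (d.ρ + x) = d.F (d.J x)
    rw [d.F_J, add_comm]
  have h2 := CircleDeg1Lift.translationNumber_eq_of_semiconj h
  rw [CircleDeg1Lift.translationNumber_translate] at h2
  exact h2.symm

end DenjoyData

/-! ### Iterates of circle diffeomorphisms -/

lemma periodic_lift_continuous {X : Type*} [TopologicalSpace X] {G : ℝ → X} (h : Periodic G 1)
    (hG : Continuous G) : Continuous (h.lift : 𝕊 → X) :=
  continuous_quot_lift _ hG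

lemma continuous_circle_coe : Continuous fun x : ℝ => (x : 𝕊) := AddCircle.continuous_mk' 1

lemma circle_coe_surj (z : 𝕊) : ∃ x : ℝ, (x : 𝕊) = z := QuotientAddGroup.mk_surjective z

namespace C1Diffeo

variable (f : C1Diffeo)

lemma iterZ_succ (n : ℤ) (x : ℝ) : f.iterZ (n + 1) x = f.F (f.iterZ n x) := by
  rcases n with n | n
  · exact iterate_succ_apply' f.F n x
  · rcases n with _ | n
    · exact (f.right_inv x).symm
    · have : Int.negSucc (n + 1) + 1 = Int.negSucc n := rfl
      rw [this]
      change f.Finv^[n + 1] x = f.F (f.Finv^[n + 1 + 1] x)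
      rw [iterate_succ_apply' f.Finv (n + 1), f.right_inv]

lemma iterZ_zero (x : ℝ) : f.iterZ 0 x = x := rfl

lemma iterZ_continuous (n : ℤ) : Continuous (f.iterZ n) := by
  rcases n with n | n
  · exact f.contDiff.continuous.iterate n
  · exact f.contDiff_inv.continuous.iterate (n + 1)

lemma iterZ_strictMono (n : ℤ) : StrictMono (f.iterZ n) := by
  have hF := strictMono_of_deriv_pos f.deriv_pos
  induction n using Int.induction_on with
  | zero => exact strictMono_id
  | succ n ih =>
    intro x y h
    rw [iterZ_succ, iterZ_succ]
    exact hF (ih h)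
  | pred n ih =>
    intro x y h
    have := ih h
    rw [show (-n : ℤ) = (-n - 1) + 1 by ring, iterZ_succ, iterZ_succ] at this
    exact hF.lt_iff_lt.1 this

/-- A two-sided sequence in which `F` maps each point to the next is the orbit of `p 0`. -/
lemma iterZ_eq_of_step {p : ℤ → ℝ} (h : ∀ n, f.F (p n) = p (n + 1)) (n : ℤ) :
    f.iterZ n (p 0) = p n := by
  have hF := (strictMono_of_deriv_pos f.deriv_pos).injective
  induction n using Int.induction_on with
  | zero => rfl
  | succ n ih => rw [iterZ_succ, ih, h]
  | pred n ih =>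
    apply hF
    rw [← iterZ_succ, h]
    simpa using ih

lemma toCircle_coe (x : ℝ) : f.toCircle (x : 𝕊) = (f.F x : 𝕊) := rfl

lemma mapZ_coe (n : ℤ) (x : ℝ) : f.mapZ n (x : 𝕊) = (f.iterZ n x : 𝕊) := rfl

lemma toCircle_continuous : Continuous f.toCircle :=
  periodic_lift_continuous _ (continuous_circle_coe.comp f.contDiff.continuous)

lemma mapZ_continuous (n : ℤ) : Continuous (f.mapZ n) :=
  periodic_lift_continuous _ (continuous_circle_coe.comp (f.iterZ_continuous n))

end C1Diffeo

namespace DenjoyData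

variable (d : DenjoyData)

/-! ### The minimal Cantor set -/

lemma iterZ_J (n : ℤ) (x : ℝ) : d.diffeo.iterZ n (d.J x) = d.J (x + n * d.ρ) := by
  have := d.diffeo.iterZ_eq_of_step (p := fun n => d.J (x + n * d.ρ)) (fun n => by
    change d.F _ = _
    rw [d.F_J]; push_cast; ring_nf) n
  simpa using this

lemma iterZ_a (n : ℤ) : d.diffeo.iterZ n (d.a 0) = d.a n := d.diffeo.iterZ_eq_of_step d.F_a n

lemma iterZ_b (n : ℤ) : d.diffeo.iterZ n (d.b 0) = d.b n := d.diffeo.iterZ_eq_of_step d.F_b n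

/-- The image of the blow-up map on the circle. -/
def core : Set 𝕊 := range fun x : ℝ => (d.J x : 𝕊)

/-- The minimal Cantor set. -/
def K : Set 𝕊 := closure d.core

lemma core_preperfect : Preperfect d.core := by
  rintro _ ⟨x, rfl⟩
  rw [accPt_iff_nhds]
  intro U hU
  have h1 : Tendsto (fun y => (d.J y : 𝕊)) (𝓝[>] x) (𝓝 (d.J x : 𝕊)) :=
    (continuous_circle_coe.tendsto _).comp (d.J_right_cont x)
  obtain ⟨y, hyU, hy⟩ := ((h1.eventually hU).and
    (Ioo_mem_nhdsGT (show x < x + 1 by linarith))).exists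
  refine ⟨_, ⟨hyU, y, rfl⟩, fun h => ?_⟩
  obtain ⟨k, hk⟩ := circle_coe_eq h
  rw [← d.J_add_int] at hk
  have h2 := d.J_strictMono.injective hk
  have h3 : (0 : ℝ) < k := by linarith [hy.1]
  have h4 : (k : ℝ) < 1 := by linarith [hy.2]
  have h5 : (0 : ℤ) < k := by exact_mod_cast h3
  have h6 : k < (1 : ℤ) := by exact_mod_cast h4
  omega

lemma gap_not_mem_K {n k : ℤ} {y : ℝ} (hy : y ∈ Ioo (d.a n + k) (d.b n + k)) :
    (y : 𝕊) ∉ d.K := by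
  intro h
  have ho : IsOpen ((fun x : ℝ => (x : 𝕊)) '' Ioo (d.a n + k) (d.b n + k)) :=
    QuotientAddGroup.isOpenMap_coe _ isOpen_Ioo
  obtain ⟨_, ⟨z, hz, rfl⟩, x, hx⟩ := mem_closure_iff.1 h _ ho ⟨y, hy, rfl⟩
  obtain ⟨j, hj⟩ := circle_coe_eq hx
  have : z = d.J (x + (-j : ℤ)) := by
    rw [d.J_add_int]; push_cast; linarith
  rw [this] at hz
  exact d.J_not_mem_gap _ n k hz.1 hz.2

/-- The complement of the Cantor set is dense. -/
lemma exists_not_mem_K {A B : ℝ} (h : A < B) : ∃ q ∈ Ioo A B, (q : 𝕊) ∉ d.K := by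
  by_contra! hc
  have ho : IsOpen ((fun x : ℝ => (x : 𝕊)) '' Ioo A B) :=
    QuotientAddGroup.isOpenMap_coe _ isOpen_Ioo
  have hm : (A + B) / 2 ∈ Ioo A B := ⟨by linarith, by linarith⟩
  obtain ⟨_, ⟨z, hz, rfl⟩, x, hx⟩ := mem_closure_iff.1 (hc _ hm) _ ho ⟨_, hm, rfl⟩
  obtain ⟨j, hj⟩ := circle_coe_eq hx
  have hz' : z = d.J (x + (-j : ℤ)) := by
    rw [d.J_add_int]; push_cast; linarith
  obtain ⟨s, hs, hs2⟩ := d.exists_J_lt _ (hz' ▸ hz.2)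
  obtain ⟨n, k, h1, h2⟩ := exists_orbit_between d.irr hs
  have h3 := d.J_jump h1
  have h4 := d.J_strictMono h2
  rw [d.J_add_int] at h4
  have h5 := d.a_lt_b n
  refine d.gap_not_mem_K (n := n) (k := k) (y := (d.a n + d.b n) / 2 + k)
    ⟨by linarith, by linarith⟩ (hc _ ⟨?_, ?_⟩)
  · have := hz.1
    unfold a b at *; linarith
  · unfold a b at *; linarith

lemma K_totallyDisconnected : IsTotallyDisconnected d.K := by
  intro t htK ht u hu v hv
  by_contra hne
  obtain ⟨U, rfl⟩ := circle_coe_surj u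
  obtain ⟨V, hV, hUV, hVU⟩ : ∃ V : ℝ, (V : 𝕊) = v ∧ U < V ∧ V < U + 1 := by
    obtain ⟨W, rfl⟩ := circle_coe_surj v
    have h1 := Int.floor_le (W - U)
    have h2 := Int.lt_floor_add_one (W - U)
    have h3 : ((W + (-⌊W - U⌋ : ℤ) : ℝ) : 𝕊) = (W : 𝕊) := circle_coe_add_int _ _
    refine ⟨W + (-⌊W - U⌋ : ℤ), h3, ?_, ?_⟩
    · refine lt_of_le_of_ne (by push_cast; linarith) fun h => hne ?_
      rw [← h3, ← h]
    · push_cast; linarith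
  obtain ⟨q, hq, hqK⟩ := d.exists_not_mem_K hUV
  obtain ⟨r, hr, hrK⟩ := d.exists_not_mem_K hVU
  have ho : ∀ A B, IsOpen ((fun x : ℝ => (x : 𝕊)) '' Ioo A B) := fun A B =>
    QuotientAddGroup.isOpenMap_coe _ isOpen_Ioo
  -- The circle minus `q` and `r` is the union of two disjoint open arcs.
  have hcov : t ⊆ (fun x : ℝ => (x : 𝕊)) '' Ioo q r ∪ (fun x : ℝ => (x : 𝕊)) '' Ioo r (q + 1) := by
    intro z hz
    obtain ⟨W, rfl⟩ := circle_coe_surj z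
    have h1 := Int.floor_le (W - q)
    have h2 := Int.lt_floor_add_one (W - q)
    have h3 : ((W + (-⌊W - q⌋ : ℤ) : ℝ) : 𝕊) = (W : 𝕊) := circle_coe_add_int _ _
    set X := W + (-⌊W - q⌋ : ℤ) with hX
    push_cast at hX
    rw [← h3] at hz ⊢
    have h4 : X ≠ q := fun h => hqK (h ▸ htK hz)
    have h5 : X ≠ r := fun h => hrK (h ▸ htK hz)
    have h6 : q < X := lt_of_le_of_ne (by linarith) h4.symm
    rcases lt_or_gt_of_ne h5 with h | h
    · exact Or.inl ⟨X, ⟨h6, h⟩, rfl⟩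
    · exact Or.inr ⟨X, ⟨h, by linarith⟩, rfl⟩
  obtain ⟨z, -, ⟨Z, hZ, hZz⟩, ⟨Y, hY, hYz⟩⟩ := ht _ _ (ho q r) (ho r (q + 1)) hcov
    ⟨v, hv, V, ⟨hq.2, hr.1⟩, hV⟩
    ⟨_, hu, U + (1 : ℤ), ⟨by push_cast; linarith [hr.2], by push_cast; linarith [hq.1]⟩,
      circle_coe_add_int U 1⟩
  obtain ⟨k, hk⟩ := circle_coe_eq (hYz.trans hZz.symm)
  have h3 : (0 : ℝ) < k := by linarith [hZ.2, hY.1]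
  have h4 : (k : ℝ) < 1 := by linarith [hZ.1, hY.2]
  have h5 : (0 : ℤ) < k := by exact_mod_cast h3
  have h6 : k < (1 : ℤ) := by exact_mod_cast h4
  omega

lemma mapZ_core (n : ℤ) : MapsTo (d.diffeo.mapZ n) d.core d.core := by
  rintro _ ⟨x, rfl⟩
  exact ⟨x + n * d.ρ, by simp only [C1Diffeo.mapZ_coe, iterZ_J]⟩

lemma image_core : d.diffeo.toCircle '' d.core = d.core := by
  refine Subset.antisymm ?_ ?_
  · rintro _ ⟨_, ⟨x, rfl⟩, rfl⟩
    exact ⟨x + d.ρ, congrArg _ (d.F_J x).symm⟩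
  · rintro _ ⟨x, rfl⟩
    refine ⟨_, ⟨x - d.ρ, rfl⟩, ?_⟩
    have := d.F_J (x - d.ρ)
    rw [sub_add_cancel] at this
    exact congrArg _ this

/-- Every orbit, of a point of `K` or not, accumulates on the whole of `K`. -/
lemma K_subset_orbit_closure (z : 𝕊) : d.K ⊆ closure (range fun n : ℤ => d.diffeo.mapZ n z) := by
  refine closure_minimal ?_ isClosed_closure
  rintro _ ⟨t, rfl⟩
  obtain ⟨y, rfl⟩ := circle_coe_surj z
  -- The supremum `x₀` of `S` is the image of `y` under the monotone left inverse of `J`.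
  let S : Set ℝ := {x | d.J x ≤ y}
  have hne : S.Nonempty := ⟨0 + ⌊y⌋, by
    change d.J _ ≤ y
    rw [d.J_add_int, d.J_zero, zero_add]; exact Int.floor_le y⟩
  have hbd : BddAbove S := ⟨0 + (⌊y⌋ + 1 : ℤ), fun x hx => by
    refine (d.J_strictMono.lt_iff_lt.1 ?_).le
    rw [d.J_add_int, d.J_zero, zero_add]
    refine lt_of_le_of_lt hx ?_
    push_cast
    exact Int.lt_floor_add_one y⟩
  set x₀ := sSup S with hx₀
  have hlo : ∀ x < x₀, d.J x ≤ y := fun x hx => by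
    obtain ⟨w, hw, hxw⟩ := exists_lt_of_lt_csSup hne hx
    exact (d.J_strictMono hxw).le.trans hw
  have hhi : ∀ x > x₀, y < d.J x := fun x hx => by
    by_contra hc
    exact absurd (le_csSup hbd (not_lt.1 hc)) (not_le.2 hx)
  rw [mem_closure_iff_nhds]
  intro N hN
  have hN' := continuous_circle_coe.continuousAt.preimage_mem_nhds hN
  obtain ⟨ε, hε, hball⟩ := Metric.mem_nhds_iff.1 hN'
  obtain ⟨s, hs, hs2⟩ := d.exists_J_lt t (show d.J t < d.J t + ε by linarith)
  -- Then `x₀ + n ρ + k` lies in `(t, s)`, so `Fⁿ y + k` lies in `[J t, J s]`.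
  obtain ⟨n, k, h1, h2⟩ := exists_orbit_between d.irr
    (show t - x₀ < s - x₀ by linarith)
  have hm := (d.diffeo.iterZ_strictMono n).monotone
  have h3 := hm (hlo (t - n * d.ρ - k) (by linarith))
  have h4 := hm (hhi (s - n * d.ρ - k) (by linarith)).le
  rw [d.iterZ_J] at h3 h4
  have h5 := d.J_add_int (t - n * d.ρ - k + n * d.ρ) k
  have h6 := d.J_add_int (s - n * d.ρ - k + n * d.ρ) k
  rw [show t - n * d.ρ - k + n * d.ρ + k = t by ring] at h5
  rw [show s - n * d.ρ - k + n * d.ρ + k = s by ring] at h6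
  refine ⟨_, ?_, n, rfl⟩
  have h7 : d.diffeo.iterZ n y + k ∈ Metric.ball (d.J t) ε := by
    rw [Metric.mem_ball, Real.dist_eq, abs_lt]
    constructor <;> linarith
  have h8 := hball h7
  simp only [mem_preimage, circle_coe_add_int] at h8
  exact h8

lemma K_minimal : IsMinimalInvariantCantor d.diffeo d.K := by
  refine ⟨⟨_, subset_closure ⟨0, rfl⟩⟩, d.core_preperfect.perfect_closure,
    d.K_totallyDisconnected, ?_, fun x hx => ?_⟩
  · have hc := d.diffeo.toCircle_continuous
    have := hc.isClosedMap.closure_image_eq_of_continuous hc d.core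
    rw [d.image_core] at this
    exact this.symm
  · refine Subset.antisymm (closure_minimal ?_ isClosed_closure) (d.K_subset_orbit_closure x)
    rintro _ ⟨n, rfl⟩
    exact map_mem_closure (d.diffeo.mapZ_continuous n) hx (d.mapZ_core n)

/-! ### The exotic invariant distribution -/

/-- The midpoint of the zeroth gap. -/
def mid : ℝ := d.b 0 - d.len 0 / 2

lemma mid_mem (n : ℤ) : d.diffeo.iterZ n d.mid ∈ Ioo (d.a n) (d.b n) := by
  have hl := d.len_pos 0
  rw [← d.iterZ_a, ← d.iterZ_b]
  exact ⟨d.diffeo.iterZ_strictMono n (by unfold a mid; linarith),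
    d.diffeo.iterZ_strictMono n (by unfold mid; linarith)⟩

/-- The difference of the values of `u` at the `n`-th images of the right endpoint and the midpoint
of the zeroth gap; the former is `b n`. -/
def term (u : 𝕊 → ℝ) (n : ℤ) : ℝ := u (d.b n) - u (d.diffeo.iterZ n d.mid)

lemma derivS_coe (u : 𝕊 → ℝ) (x : ℝ) : derivS u (x : 𝕊) = deriv (lft u) x := rfl

lemma derivS_bdd {u : 𝕊 → ℝ} (hu : IsC1 u) : BddAbove (range fun x => |derivS u x|) := by
  have h : Continuous (derivS u) := by
    refine periodic_lift_continuous _ ?_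
    exact (contDiff_one_iff_deriv.1 hu).2
  exact (isCompact_range h.abs).bddAbove

lemma lipschitz_c1 {u : 𝕊 → ℝ} (hu : IsC1 u) (x y : ℝ) :
    |u (y : 𝕊) - u (x : 𝕊)| ≤ c1Norm u * |y - x| := by
  have h1 := Convex.norm_image_sub_le_of_norm_deriv_le (f := lft u) (s := univ) (x := x) (y := y)
    (C := ⨆ x : 𝕊, |derivS u x|)
    (fun z _ => (contDiff_one_iff_deriv.1 hu).1 z)
    (fun z _ => by
      rw [Real.norm_eq_abs, ← derivS_coe]
      exact le_ciSup (derivS_bdd hu) (z : 𝕊)) convex_univ (mem_univ _) (mem_univ _)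
  refine h1.trans (mul_le_mul_of_nonneg_right ?_ (abs_nonneg _))
  have : 0 ≤ ⨆ x : 𝕊, |u x| := Real.iSup_nonneg fun x => abs_nonneg _
  unfold c1Norm
  linarith

lemma term_le {u : 𝕊 → ℝ} (hu : IsC1 u) (n : ℤ) : ‖d.term u n‖ ≤ c1Norm u * d.len n := by
  have h := d.mid_mem n
  have hc : 0 ≤ c1Norm u := add_nonneg (Real.iSup_nonneg fun x => abs_nonneg _)
    (Real.iSup_nonneg fun x => abs_nonneg _)
  refine (lipschitz_c1 hu _ _).trans (mul_le_mul_of_nonneg_left ?_ hc)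
  rw [abs_of_pos (by linarith [h.2])]
  have := h.1
  unfold a at this; linarith

lemma term_summable {u : 𝕊 → ℝ} (hu : IsC1 u) : Summable (d.term u) :=
  Summable.of_norm_bounded (d.hasSum_len.summable.mul_left _) (d.term_le hu)

/-- The exotic distribution `u ↦ ∑ₙ (u (fⁿ b) - u (fⁿ m))`, with `b` the right endpoint and `m` the
midpoint of the zeroth gap. -/
def L : C1Sub →ₗ[ℝ] ℝ where
  toFun u := ∑' n, d.term u n
  map_add' u v := by
    rw [← (d.term_summable u.2).tsum_add (d.term_summable v.2)]
    exact tsum_congr fun n => by simp [term]; ring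
  map_smul' c u := by
    rw [RingHom.id_apply, smul_eq_mul, ← tsum_mul_left]
    exact tsum_congr fun n => by simp [term]; ring

lemma L_apply (u : C1Sub) : d.L u = ∑' n, d.term u n := rfl

lemma L_distribution : IsDistribution d.L := by
  refine ⟨1 / 2, fun u => ?_⟩
  have := tsum_of_norm_bounded (d.hasSum_len.mul_left (c1Norm (u : 𝕊 → ℝ))) (d.term_le u.2)
  rw [mul_comm]
  exact this

lemma L_invariant : InvariantUnder d.diffeo d.L := by
  intro u v h
  rw [L_apply, L_apply, ← (Equiv.addRight (1 : ℤ)).tsum_eq (d.term u)]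
  refine tsum_congr fun n => ?_
  unfold term
  rw [h, h, C1Diffeo.toCircle_coe, C1Diffeo.toCircle_coe, ← C1Diffeo.iterZ_succ]
  change _ = u.1 (d.b (n + 1)) - _
  rw [← d.F_b]
  rfl

/-- A smooth nonnegative periodic function, positive exactly at distance less than `len 0 / 2`
from `mid` modulo `1`. -/
def test (y : ℝ) : ℝ :=
  Real.smoothTransition (Real.cos (2 * Real.pi * (y - d.mid)) - Real.cos (Real.pi * d.len 0))

lemma test_periodic : Periodic d.test 1 := fun y => by
  unfold test
  rw [show 2 * Real.pi * (y + 1 - d.mid) = 2 * Real.pi * (y - d.mid) + 2 * Real.pi by ring,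
    Real.cos_add_two_pi]

lemma test_contDiff : ContDiff ℝ 1 d.test := by
  unfold test
  have : ContDiff ℝ 1 Real.smoothTransition := Real.smoothTransition.contDiff (n := 1)
  refine this.comp ?_
  fun_prop

lemma test_mid_pos : 0 < d.test d.mid := by
  refine Real.smoothTransition.pos_of_pos ?_
  have hl := d.len_pos 0
  have hl2 := d.len_le 0
  have := Real.cos_lt_cos_of_nonneg_of_le_pi (x := 0) (y := Real.pi * d.len 0) le_rfl
    (by nlinarith [Real.pi_pos]) (by have := Real.pi_pos; positivity)
  rw [Real.cos_zero] at this
  simpa using this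

lemma test_zero {y : ℝ} (h : ∀ k : ℤ, y ∉ Ioo (d.a 0 + k) (d.b 0 + k)) : d.test y = 0 := by
  refine Real.smoothTransition.zero_of_nonpos ?_
  have hl := d.len_pos 0
  set k := round (y - d.mid) with hk
  have h1 : |y - d.mid - k| ≤ 1 / 2 := abs_sub_round _
  have h2 : d.len 0 / 2 ≤ |y - d.mid - k| := by
    by_contra hc
    have h3 := abs_lt.1 (not_le.1 hc)
    refine h k ⟨?_, ?_⟩
    · unfold a; unfold mid at h3; linarith [h3.1]
    · unfold mid at h3; linarith [h3.2]
  have h3 : Real.cos (2 * Real.pi * (y - d.mid)) = Real.cos (2 * Real.pi * |y - d.mid - k|) := by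
    rw [show 2 * Real.pi * |y - d.mid - k| = |2 * Real.pi * (y - d.mid - k)| by
      rw [abs_mul, abs_of_pos Real.two_pi_pos], Real.cos_abs,
      show 2 * Real.pi * (y - d.mid - k) = 2 * Real.pi * (y - d.mid) - k * (2 * Real.pi) by ring,
      Real.cos_sub_int_mul_two_pi]
  rw [h3, sub_nonpos]
  have hp := Real.pi_pos
  refine Real.cos_le_cos_of_nonneg_of_le_pi (by positivity) ?_ ?_ <;> nlinarith

lemma L_ne_zero : ∃ u : C1Sub, d.L u ≠ 0 := by
  have hl : lft d.test_periodic.lift = d.test := rfl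
  let u : C1Sub := ⟨d.test_periodic.lift, by
    change ContDiff ℝ 1 (lft d.test_periodic.lift)
    rw [hl]; exact d.test_contDiff⟩
  refine ⟨u, ?_⟩
  have hterm : ∀ n, d.term u n = d.test (d.b n) - d.test (d.diffeo.iterZ n d.mid) := fun n => rfl
  have hb : ∀ n, d.test (d.b n) = 0 := fun n => d.test_zero fun k hk => by
    refine d.J_not_mem_gap (n * d.ρ) 0 k hk.1 hk.2
  rw [L_apply, tsum_eq_single 0]
  · rw [hterm, hb, C1Diffeo.iterZ_zero]
    linarith [d.test_mid_pos]
  · intro n hn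
    rw [hterm, hb, d.test_zero, sub_zero]
    intro k hk
    refine hn (d.gap_disjoint (j := 0) hk ?_ rfl).symm
    simpa using Ioo_subset_Icc_self (d.mid_mem n)

lemma L_one (u : C1Sub) (hu : ∀ x, (u : 𝕊 → ℝ) x = 1) : d.L u = 0 := by
  rw [L_apply]
  simp [term, hu]

end DenjoyData

/-! ### Existence of suitable lengths -/

/-- Lengths proportional to `1 / (n ^ 2 + 16)`: consecutive ratios are close to `1` and tend to
`1`. -/
lemma exists_denjoyData {ρ : ℝ} (h : Irrational ρ) : ∃ d : DenjoyData, d.ρ = ρ := by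
  let w : ℤ → ℝ := fun n => 1 / ((n : ℝ) ^ 2 + 16)
  have hw : ∀ n, 0 < w n := fun n => by positivity
  have hs : Summable w := by
    refine Summable.of_norm_bounded_eventually
      ((Real.summable_one_div_int_pow (p := 2)).2 (by norm_num)) ?_
    filter_upwards [(finite_singleton (0 : ℤ)).compl_mem_cofinite] with n hn
    have hn : n ≠ 0 := hn
    have : (0 : ℝ) < (n : ℝ) ^ 2 := by positivity
    rw [Real.norm_eq_abs, abs_of_pos (hw n)]
    exact one_div_le_one_div_of_le this (by linarith)
  have hpos : 0 < ∑' n, w n := hs.tsum_pos (fun n => (hw n).le) 0 (hw 0)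
  set T := ∑' n, w n with hT
  have hratio : ∀ n : ℤ, w (n + 1) / (2 * T) / (w n / (2 * T)) - 1 =
      -(2 * n + 1) / (((n + 1 : ℝ)) ^ 2 + 16) := by
    intro n
    have h1 : (n : ℝ) ^ 2 + 16 ≠ 0 := by positivity
    have h2 : ((n : ℝ) + 1) ^ 2 + 16 ≠ 0 := by positivity
    have h3 := hpos.ne'
    simp only [w]
    push_cast
    field_simp
    ring
  refine ⟨⟨ρ, h, fun n => w n / (2 * T), fun n => div_pos (hw n) (by positivity), ?_, ?_, ?_⟩, rfl⟩
  · have := hs.hasSum.div_const (2 * T)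
    rwa [← hT, show T / (2 * T) = 1 / 2 by field_simp] at this
  · intro n
    rw [hratio, abs_div, abs_of_pos (a := ((n + 1 : ℝ)) ^ 2 + 16) (by positivity),
      div_lt_iff₀ (by positivity), abs_lt]
    constructor <;> nlinarith [sq_nonneg ((n : ℝ) - 1), sq_nonneg ((n : ℝ) + 3)]
  · have hb : Tendsto (fun n : ℤ => 3 / |(n : ℝ) + 1|) cofinite (𝓝 0) := by
      have h1 : Tendsto (fun n : ℤ => n + 1) cofinite cofinite :=
        (add_left_injective (1 : ℤ)).tendsto_cofinite
      have h2 : Tendsto (fun n : ℤ => |(n : ℝ)|) cofinite atTop := by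
        have h := tendsto_norm_cocompact_atTop (E := ℤ)
        rw [cocompact_eq_cofinite] at h
        exact h.congr fun n => Int.norm_eq_abs n
      have := (h2.comp h1).const_div_atTop 3
      simpa [comp_def] using this
    have hz : Tendsto (fun n => w (n + 1) / (2 * T) / (w n / (2 * T)) - 1) cofinite (𝓝 0) := by
      refine squeeze_zero_norm' ?_ hb
      filter_upwards [(finite_singleton (-1 : ℤ)).compl_mem_cofinite] with n hn
      have hn : n ≠ -1 := hn
      have h1 : n + 1 ≠ 0 := by omega
      have h2 : (1 : ℝ) ≤ |(n : ℝ) + 1| := by exact_mod_cast Int.one_le_abs h1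
      rw [hratio, Real.norm_eq_abs, abs_div, ← sq_abs ((n : ℝ) + 1)]
      rw [abs_of_pos (a := |(n : ℝ) + 1| ^ 2 + 16) (by positivity),
        div_le_div_iff₀ (by positivity) (by positivity)]
      have h3 : |-(2 * (n : ℝ) + 1)| ≤ 3 * |(n : ℝ) + 1| := by
        rw [show -(2 * (n : ℝ) + 1) = 1 + -2 * (n + 1) by ring]
        refine (abs_add_le _ _).trans ?_
        rw [abs_mul, abs_one]
        norm_num
        linarith
      nlinarith [abs_nonneg ((n : ℝ) + 1)]
    simpa using hz.add_const 1

/-- **Theorem B (Denjoy case).** For each irrational angle `ρ` there exists a `C¹` circle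
diffeomorphism of rotation number `ρ` admitting a minimal invariant Cantor set and having an
invariant 1-distribution which is not a scalar multiple of integration against the (unique)
invariant probability measure. -/
theorem exists_denjoy_C1_with_exotic_invariant_distribution (ρ : ℝ) (hρ : Irrational ρ) :
    ∃ f : C1Diffeo, f.rot = ρ ∧
      (∃ K : Set 𝕊, IsMinimalInvariantCantor f K) ∧
      ∃ L : C1Sub →ₗ[ℝ] ℝ, IsDistribution L ∧ InvariantUnder f L ∧
        ∀ (μ : Measure 𝕊), IsProbabilityMeasure μ → MeasurePreserving f.toCircle μ μ →
          ¬ ∃ c : ℝ, ∀ u : C1Sub, L u = c * ∫ x, (u : 𝕊 → ℝ) x ∂μ := by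
  obtain ⟨d, rfl⟩ := exists_denjoyData hρ
  refine ⟨d.diffeo, d.diffeo_rot, ⟨d.K, d.K_minimal⟩, d.L, d.L_distribution, d.L_invariant, ?_⟩
  rintro μ hμ - ⟨c, hc⟩
  -- Testing against the constant function `1` forces `c = 0`, contradicting `L ≠ 0`.
  let e : C1Sub := ⟨fun _ => 1, show ContDiff ℝ 1 (fun _ : ℝ => (1 : ℝ)) from contDiff_const⟩
  have h1 := hc e
  rw [d.L_one e fun _ => rfl] at h1
  have h2 : c = 0 := by simpa [e] using h1.symm
  obtain ⟨u, hu⟩ := d.L_ne_zero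
  exact hu (by rw [hc u, h2, zero_mul])
end
end
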